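/- arXiv:2307.03594 — 7 statements merged into one kernel-verified Lean document; each statement's English description precedes it below -/
import Mathlib

section
/- Let X be a real random variable and λ > 0. If X has the same distribution as −λX (i.e., the law of X equals the law of ω ↦ −λ·X(ω)), then λ = 1 or X = 0 almost surely. -/
/-!
If `X` and `cX` have the same law, then so do `‖X‖` and `‖c‖ ‖X‖`, and one of these two functions
dominates the other everywhere. On a finite measure space a function dominated by another one of
the same law agrees with it almost everywhere, because their sublevel sets are nested and have the
same finite measure. Hence `‖X‖ = ‖c‖ ‖X‖` almost everywhere.
-/

open MeasureTheory

section

open ProbabilityTheory Set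

variable {Ω : Type*} [MeasurableSpace Ω] {μ : Measure Ω} [IsFiniteMeasure μ]

theorem ae_eq_of_ae_le_of_identDistrib {α : Type*} [LinearOrder α] [TopologicalSpace α]
    [OrderTopology α] [SecondCountableTopology α] [MeasurableSpace α] [OpensMeasurableSpace α]
    {f g : Ω → α} (hle : f ≤ᵐ[μ] g) (h : IdentDistrib f g μ μ) : f =ᵐ[μ] g := by
  refine Filter.EventuallyEq.of_forall_eventually_le_iff fun a => ?_
  have hsub : g ⁻¹' Iic a ≤ᵐ[μ] f ⁻¹' Iic a := hle.mono fun _ hω hg => hω.trans hg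
  have hmeas : μ (f ⁻¹' Iic a) = μ (g ⁻¹' Iic a) := h.measure_mem_eq measurableSet_Iic
  have hnull : NullMeasurableSet (g ⁻¹' Iic a) μ :=
    h.aemeasurable_snd.nullMeasurableSet_preimage measurableSet_Iic
  have heq : g ⁻¹' Iic a =ᵐ[μ] f ⁻¹' Iic a :=
    ae_eq_of_ae_subset_of_measure_ge hsub hmeas.le hnull (measure_ne_top μ _)
  exact heq.symm.mem_iff

variable {𝕜 E : Type*} [Norm 𝕜] [NormedAddCommGroup E] [SMul 𝕜 E] [NormSMulClass 𝕜 E]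
  [MeasurableSpace E] [OpensMeasurableSpace E] {c : 𝕜} {X : Ω → E}

theorem norm_ae_eq_norm_const_smul_of_identDistrib
    (h : IdentDistrib X (fun ω => c • X ω) μ μ) :
    (fun ω => ‖X ω‖) =ᵐ[μ] fun ω => ‖c • X ω‖ := by
  rcases le_total ‖c‖ 1 with hc | hc
  · have hle (ω : Ω) : ‖c • X ω‖ ≤ ‖X ω‖ := by
      rw [norm_smul]
      exact mul_le_of_le_one_left (norm_nonneg _) hc
    exact (ae_eq_of_ae_le_of_identDistrib (.of_forall hle) h.norm.symm).symm
  · have hle (ω : Ω) : ‖X ω‖ ≤ ‖c • X ω‖ := by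
      rw [norm_smul]
      exact le_mul_of_one_le_left (norm_nonneg _) hc
    exact ae_eq_of_ae_le_of_identDistrib (.of_forall hle) h.norm

theorem eq_one_or_ae_zero_of_distrib_eq_neg_smul_general
    (h : IdentDistrib X (fun ω => c • X ω) μ μ) :
    ‖c‖ = 1 ∨ X =ᵐ[μ] fun _ => (0 : E) := by
  refine or_iff_not_imp_left.2 fun hc => ?_
  filter_upwards [norm_ae_eq_norm_const_smul_of_identDistrib h] with ω hω
  have hfix : ‖c‖ * ‖X ω‖ = ‖X ω‖ := by rw [← norm_smul, ← hω]
  exact norm_eq_zero.1 ((mul_left_eq_self₀.1 hfix).resolve_left hc)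

end

theorem eq_one_or_ae_zero_of_distrib_eq_neg_smul
    {Ω : Type*} [MeasurableSpace Ω] (μ : Measure Ω) [IsProbabilityMeasure μ]
    (X : Ω → ℝ) (hX : Measurable X) (l : ℝ) (hl : 0 < l)
    (h : μ.map X = μ.map (fun ω => -l * X ω)) :
    l = 1 ∨ (X =ᵐ[μ] fun _ => (0 : ℝ)) := by
  simpa [abs_of_pos hl] using eq_one_or_ae_zero_of_distrib_eq_neg_smul_general (c := -l)
    ⟨hX.aemeasurable, (hX.const_mul (-l)).aemeasurable, h⟩
end

section
/- Let X, Y, Y', Y'' be real random variables on a common probability space such that Y, Y', Y'' are identically distributed, (X,Y') is countermonotonic, and (X,Y'') is comonotonic. Let g₁, g₂ : ℝ → ℝ be nondecreasing functions such that g₁∘X, g₂∘Y, g₂∘Y', g₂∘Y'' are integrable and both products (g₁∘X)·(g₂∘Y') and (g₁∘X)·(g₂∘Y'') are integrable. Then (g₁∘X)·(g₂∘Y) is integrable and Cov(g₁∘X, g₂∘Y') ≤ Cov(g₁∘X, g₂∘Y) ≤ Cov(g₁∘X, g₂∘Y''). -/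
open MeasureTheory

/-- `(X,Y)` is comonotonic: it has the same joint distribution as a pair of
nondecreasing functions of a single random variable. -/
def Comonotonic {Ω : Type*} [MeasurableSpace Ω] (μ : Measure Ω) (X Y : Ω → ℝ) : Prop :=
  ∃ (Z : Ω → ℝ) (ν₁ ν₂ : ℝ → ℝ), Measurable Z ∧ Monotone ν₁ ∧ Monotone ν₂ ∧
    μ.map (fun ω => (X ω, Y ω)) = μ.map (fun ω => (ν₁ (Z ω), ν₂ (Z ω)))

/-- `(X,Y)` is countermonotonic: it has the same joint distribution as a pair of a
nondecreasing and a nonincreasing function of a single random variable. -/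
def Countermonotonic {Ω : Type*} [MeasurableSpace Ω] (μ : Measure Ω) (X Y : Ω → ℝ) : Prop :=
  ∃ (Z : Ω → ℝ) (ν₁ ν₂ : ℝ → ℝ), Measurable Z ∧ Monotone ν₁ ∧ Antitone ν₂ ∧
    μ.map (fun ω => (X ω, Y ω)) = μ.map (fun ω => (ν₁ (Z ω), ν₂ (Z ω)))

/-- Covariance `Cov(U,V) = E[UV] − E[U]E[V]`. -/
noncomputable def covar {Ω : Type*} [MeasurableSpace Ω] (μ : Measure Ω) (U V : Ω → ℝ) : ℝ :=
  ∫ ω, U ω * V ω ∂μ - (∫ ω, U ω ∂μ) * (∫ ω, V ω ∂μ)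

/-!
Upper sets of `ℝ` are nested, so the law of `(X, Y'')` attains the Fréchet upper bound
`P(X ∈ s, Y'' ∈ t) ≤ min (P(X ∈ s)) (P(Y'' ∈ t))` for all upper sets `s` and `t`, and likewise the
law of `(X, Y')` attains it for `s` upper and `t` lower. Taking complements with fixed marginals,
both facts say that the laws of `(X, Y')`, `(X, Y)`, `(X, Y'')` increase in the concordance order.

Apply Hoeffding's formula `E[U⁺ V⁺] = ∫∫_{s, t > 0} P(U > s, V > t) ds dt` to the four sign choices
in `(U V)⁺ = U⁺ V⁺ + U⁻ V⁻` and `(U V)⁻ = U⁺ V⁻ + U⁻ V⁺`, where `U = g₁ ∘ X` and `V = g₂ ∘ Y`: along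
the concordance order `E[(U V)⁺]` increases and `E[(U V)⁻]` decreases. So the comonotonic coupling
bounds the former and the countermonotonic coupling the latter, giving integrability as well as
both inequalities.
-/

section Integral

variable {Ω Ω' : Type*} [MeasurableSpace Ω] [MeasurableSpace Ω'] {μ : Measure Ω} {ν : Measure Ω'}

lemma lintegral_ofReal_mul_ofReal_eq_setLIntegral_measure [SFinite μ] {U V : Ω → ℝ}
    (hU : Measurable U) (hV : Measurable V) :
    ∫⁻ ω, ENNReal.ofReal (U ω) * ENNReal.ofReal (V ω) ∂μ =
      ∫⁻ p in Set.Ioi (0 : ℝ) ×ˢ Set.Ioi (0 : ℝ), μ {ω | p.1 < U ω ∧ p.2 < V ω} := by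
  set Q := Set.Ioi (0 : ℝ) ×ˢ Set.Ioi (0 : ℝ)
  set S := {q : Ω × (ℝ × ℝ) | q.2.1 < U q.1 ∧ q.2.2 < V q.1}
  have hS : MeasurableSet S :=
    (measurableSet_lt measurable_snd.fst (hU.comp measurable_fst)).inter
      (measurableSet_lt measurable_snd.snd (hV.comp measurable_fst))
  have section_volume (ω : Ω) :
      volume.restrict Q (Prod.mk ω ⁻¹' S) = ENNReal.ofReal (U ω) * ENNReal.ofReal (V ω) := by
    have section_eq : Prod.mk ω ⁻¹' S = Set.Iio (U ω) ×ˢ Set.Iio (V ω) := rfl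
    rw [section_eq, Measure.restrict_apply (measurableSet_Iio.prod measurableSet_Iio),
      Set.prod_inter_prod, Measure.volume_eq_prod, Measure.prod_prod, Set.inter_comm,
      Set.Ioi_inter_Iio, Set.inter_comm, Set.Ioi_inter_Iio, Real.volume_Ioo, Real.volume_Ioo,
      sub_zero, sub_zero]
  calc ∫⁻ ω, ENNReal.ofReal (U ω) * ENNReal.ofReal (V ω) ∂μ
      = μ.prod (volume.restrict Q) S := by simp_rw [Measure.prod_apply hS, section_volume]
    _ = ∫⁻ p in Q, μ {ω | p.1 < U ω ∧ p.2 < V ω} := Measure.prod_apply_symm hS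

lemma lintegral_ofReal_mul_ofReal_le_of_measure_le [SFinite μ] [SFinite ν]
    {U V : Ω → ℝ} {U' V' : Ω' → ℝ} (hU : Measurable U) (hV : Measurable V)
    (hU' : Measurable U') (hV' : Measurable V')
    (h : ∀ s t, μ {ω | s < U ω ∧ t < V ω} ≤ ν {ω | s < U' ω ∧ t < V' ω}) :
    ∫⁻ ω, ENNReal.ofReal (U ω) * ENNReal.ofReal (V ω) ∂μ ≤
      ∫⁻ ω, ENNReal.ofReal (U' ω) * ENNReal.ofReal (V' ω) ∂ν := by
  rw [lintegral_ofReal_mul_ofReal_eq_setLIntegral_measure hU hV,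
    lintegral_ofReal_mul_ofReal_eq_setLIntegral_measure hU' hV']
  exact lintegral_mono fun p => h p.1 p.2

lemma ofReal_mul_eq_add (x y : ℝ) :
    ENNReal.ofReal (x * y) =
      ENNReal.ofReal x * ENNReal.ofReal y + ENNReal.ofReal (-x) * ENNReal.ofReal (-y) := by
  rcases le_total 0 x with hx | hx
  · rw [ENNReal.ofReal_mul hx, ENNReal.ofReal_of_nonpos (neg_nonpos.2 hx), zero_mul, add_zero]
  · rw [← neg_mul_neg, ENNReal.ofReal_mul (neg_nonneg.2 hx), ENNReal.ofReal_of_nonpos hx, zero_mul,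
      zero_add]

lemma lintegral_ofReal_mul_eq_add {U V : Ω → ℝ} (hU : Measurable U) (hV : Measurable V) :
    ∫⁻ ω, ENNReal.ofReal (U ω * V ω) ∂μ =
      ∫⁻ ω, ENNReal.ofReal (U ω) * ENNReal.ofReal (V ω) ∂μ +
        ∫⁻ ω, ENNReal.ofReal (-U ω) * ENNReal.ofReal (-V ω) ∂μ := by
  simp_rw [ofReal_mul_eq_add]
  exact lintegral_add_left (by fun_prop) _

lemma integrable_of_lintegral_ofReal_lt_top {f : Ω → ℝ} (hf : AEStronglyMeasurable f μ)
    (hpos : ∫⁻ ω, ENNReal.ofReal (f ω) ∂μ < ⊤) (hneg : ∫⁻ ω, ENNReal.ofReal (-f ω) ∂μ < ⊤) :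
    Integrable f μ := by
  have enorm_eq (x : ℝ) : ‖x‖ₑ = ENNReal.ofReal x + ENNReal.ofReal (-x) := by
    rw [Real.enorm_eq_ofReal_abs]
    rcases le_total 0 x with hx | hx
    · rw [abs_of_nonneg hx, ENNReal.ofReal_of_nonpos (neg_nonpos.2 hx), add_zero]
    · rw [abs_of_nonpos hx, ENNReal.ofReal_of_nonpos hx, zero_add]
  refine ⟨hf, ?_⟩
  simp_rw [HasFiniteIntegral, enorm_eq]
  rw [lintegral_add_left' hf.aemeasurable.ennreal_ofReal]
  exact ENNReal.add_lt_top.2 ⟨hpos, hneg⟩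

lemma integral_le_integral_of_lintegral_ofReal_le {f : Ω → ℝ} {g : Ω' → ℝ}
    (hf : Integrable f μ) (hg : Integrable g ν)
    (hpos : ∫⁻ ω, ENNReal.ofReal (f ω) ∂μ ≤ ∫⁻ ω, ENNReal.ofReal (g ω) ∂ν)
    (hneg : ∫⁻ ω, ENNReal.ofReal (-g ω) ∂ν ≤ ∫⁻ ω, ENNReal.ofReal (-f ω) ∂μ) :
    ∫ ω, f ω ∂μ ≤ ∫ ω, g ω ∂ν := by
  rw [integral_eq_lintegral_pos_part_sub_lintegral_neg_part hf,
    integral_eq_lintegral_pos_part_sub_lintegral_neg_part hg]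
  exact sub_le_sub (ENNReal.toReal_mono hg.lintegral_lt_top.ne hpos)
    (ENNReal.toReal_mono hf.neg.lintegral_lt_top.ne hneg)

lemma measure_sdiff_le_measure_sdiff_of_inter_le {μ ν : Measure Ω} [IsFiniteMeasure ν]
    {s t : Set Ω} (ht : MeasurableSet t) (hs : ν s ≤ μ s) (hst : μ (s ∩ t) ≤ ν (s ∩ t)) :
    ν (s \ t) ≤ μ (s \ t) := by
  refine (ENNReal.add_le_add_iff_left (measure_ne_top ν (s ∩ t))).1 ?_
  calc ν (s ∩ t) + ν (s \ t) = ν s := measure_inter_add_sdiff s ht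
    _ ≤ μ s := hs
    _ = μ (s ∩ t) + μ (s \ t) := (measure_inter_add_sdiff s ht).symm
    _ ≤ ν (s ∩ t) + μ (s \ t) := by gcongr

end Integral

section Concordance

lemma isLowerSet_preimage_of_antitone {α β : Type*} [Preorder α] [Preorder β] {f : α → β}
    {s : Set β} (hs : IsUpperSet s) (hf : Antitone f) : IsLowerSet (f ⁻¹' s) :=
  fun _ _ hab ha => hs (hf hab) ha

variable {α β : Type*} [MeasurableSpace α] [MeasurableSpace β] [Preorder α] [Preorder β]

/-- The concordance order on measures with common marginals: `ρ` gives more mass than `π` to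
every product of upper sets. Quantifying over all measurable upper sets rather than over open
quadrants makes the order available on any preorder and covers superlevel sets of monotone
functions at once. -/
structure ConcordanceLE (π ρ : Measure (α × β)) : Prop where
  fst_eq : π.fst = ρ.fst
  snd_eq : π.snd = ρ.snd
  measure_prod_le : ∀ ⦃s : Set α⦄ ⦃t : Set β⦄, MeasurableSet s → MeasurableSet t →
    IsUpperSet s → IsUpperSet t → π (s ×ˢ t) ≤ ρ (s ×ˢ t)

namespace ConcordanceLE

variable {π ρ σ : Measure (α × β)} {s : Set α} {t : Set β} {f : α → ℝ} {g : β → ℝ}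

lemma of_measure_upper_prod_lower_le [IsFiniteMeasure π] (hfst : π.fst = ρ.fst)
    (hsnd : π.snd = ρ.snd)
    (h : ∀ ⦃s : Set α⦄ ⦃t : Set β⦄, MeasurableSet s → MeasurableSet t →
      IsUpperSet s → IsLowerSet t → ρ (s ×ˢ t) ≤ π (s ×ˢ t)) :
    ConcordanceLE π ρ := by
  refine ⟨hfst, hsnd, fun s t hs ht hsu htu => ?_⟩
  have fst_le : π (Prod.fst ⁻¹' s) ≤ ρ (Prod.fst ⁻¹' s) := by
    rw [← Measure.fst_apply hs, ← Measure.fst_apply hs, hfst]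
  simpa [Set.prod_eq, Set.sdiff_eq] using
    measure_sdiff_le_measure_sdiff_of_inter_le (measurable_snd ht.compl) fst_le
      (h hs ht.compl hsu htu.compl)

lemma measure_upper_prod_lower_le [IsFiniteMeasure ρ] (h : ConcordanceLE π ρ)
    (hs : MeasurableSet s) (ht : MeasurableSet t) (hsu : IsUpperSet s) (htl : IsLowerSet t) :
    ρ (s ×ˢ t) ≤ π (s ×ˢ t) := by
  have fst_le : ρ (Prod.fst ⁻¹' s) ≤ π (Prod.fst ⁻¹' s) := by
    rw [← Measure.fst_apply hs, ← Measure.fst_apply hs, h.fst_eq]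
  simpa [Set.prod_eq, Set.sdiff_eq] using
    measure_sdiff_le_measure_sdiff_of_inter_le (measurable_snd ht.compl) fst_le
      (h.measure_prod_le hs ht.compl hsu htl.compl)

lemma swap (h : ConcordanceLE π ρ) :
    ConcordanceLE (π.map Prod.swap) (ρ.map Prod.swap) where
  fst_eq := by rw [Measure.fst_map_swap, Measure.fst_map_swap, h.snd_eq]
  snd_eq := by rw [Measure.snd_map_swap, Measure.snd_map_swap, h.fst_eq]
  measure_prod_le s t hs ht hsu htu := by
    rw [Measure.map_apply measurable_swap (hs.prod ht), Measure.map_apply measurable_swap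
      (hs.prod ht), Set.preimage_swap_prod]
    exact h.measure_prod_le ht hs htu hsu

lemma measure_lower_prod_upper_le [IsFiniteMeasure ρ] (h : ConcordanceLE π ρ)
    (hs : MeasurableSet s) (ht : MeasurableSet t) (hsl : IsLowerSet s) (htu : IsUpperSet t) :
    ρ (s ×ˢ t) ≤ π (s ×ˢ t) := by
  simpa only [Measure.map_apply measurable_swap (ht.prod hs), Set.preimage_swap_prod] using
    h.swap.measure_upper_prod_lower_le ht hs htu hsl

lemma measure_lower_prod_lower_le [IsFiniteMeasure π] [IsFiniteMeasure ρ] (h : ConcordanceLE π ρ)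
    (hs : MeasurableSet s) (ht : MeasurableSet t) (hsl : IsLowerSet s) (htl : IsLowerSet t) :
    π (s ×ˢ t) ≤ ρ (s ×ˢ t) := by
  have snd_le : π (Prod.snd ⁻¹' t) ≤ ρ (Prod.snd ⁻¹' t) := by
    rw [← Measure.snd_apply ht, ← Measure.snd_apply ht, h.snd_eq]
  simpa [Set.prod_eq, Set.sdiff_eq, Set.inter_comm] using
    measure_sdiff_le_measure_sdiff_of_inter_le (measurable_fst hs.compl) snd_le
      (by simpa [Set.prod_eq, Set.inter_comm] using
        h.measure_upper_prod_lower_le hs.compl ht hsl.compl htl)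

lemma lintegral_ofReal_mul_le [IsFiniteMeasure π] [IsFiniteMeasure ρ] (h : ConcordanceLE π ρ)
    (hf : Monotone f) (hg : Monotone g) (hfm : Measurable f) (hgm : Measurable g) :
    ∫⁻ p, ENNReal.ofReal (f p.1 * g p.2) ∂π ≤ ∫⁻ p, ENNReal.ofReal (f p.1 * g p.2) ∂ρ := by
  have hf₁ : Measurable fun p : α × β => f p.1 := by fun_prop
  have hg₂ : Measurable fun p : α × β => g p.2 := by fun_prop
  rw [lintegral_ofReal_mul_eq_add hf₁ hg₂, lintegral_ofReal_mul_eq_add hf₁ hg₂]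
  exact add_le_add
    (lintegral_ofReal_mul_ofReal_le_of_measure_le hf₁ hg₂ hf₁ hg₂ fun s t =>
      h.measure_prod_le (hfm measurableSet_Ioi) (hgm measurableSet_Ioi)
        ((isUpperSet_Ioi s).preimage hf) ((isUpperSet_Ioi t).preimage hg))
    (lintegral_ofReal_mul_ofReal_le_of_measure_le hf₁.neg hg₂.neg hf₁.neg hg₂.neg fun s t =>
      h.measure_lower_prod_lower_le (hfm.neg measurableSet_Ioi) (hgm.neg measurableSet_Ioi)
        (isLowerSet_preimage_of_antitone (isUpperSet_Ioi s) hf.neg)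
        (isLowerSet_preimage_of_antitone (isUpperSet_Ioi t) hg.neg))

lemma lintegral_ofReal_neg_mul_le [IsFiniteMeasure π] [IsFiniteMeasure ρ]
    (h : ConcordanceLE π ρ) (hf : Monotone f) (hg : Monotone g) (hfm : Measurable f)
    (hgm : Measurable g) :
    ∫⁻ p, ENNReal.ofReal (-(f p.1 * g p.2)) ∂ρ ≤ ∫⁻ p, ENNReal.ofReal (-(f p.1 * g p.2)) ∂π := by
  have hf₁ : Measurable fun p : α × β => f p.1 := by fun_prop
  have hg₂ : Measurable fun p : α × β => g p.2 := by fun_prop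
  have hg₂' : Measurable fun p : α × β => -g p.2 := hg₂.neg
  simp_rw [← mul_neg]
  rw [lintegral_ofReal_mul_eq_add hf₁ hg₂', lintegral_ofReal_mul_eq_add hf₁ hg₂']
  simp_rw [neg_neg]
  exact add_le_add
    (lintegral_ofReal_mul_ofReal_le_of_measure_le hf₁ hg₂' hf₁ hg₂' fun s t =>
      h.measure_upper_prod_lower_le (hfm measurableSet_Ioi) (hgm.neg measurableSet_Ioi)
        ((isUpperSet_Ioi s).preimage hf)
        (isLowerSet_preimage_of_antitone (isUpperSet_Ioi t) hg.neg))
    (lintegral_ofReal_mul_ofReal_le_of_measure_le hf₁.neg hg₂ hf₁.neg hg₂ fun s t =>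
      h.measure_lower_prod_upper_le (hfm.neg measurableSet_Ioi) (hgm measurableSet_Ioi)
        (isLowerSet_preimage_of_antitone (isUpperSet_Ioi s) hf.neg)
        ((isUpperSet_Ioi t).preimage hg))

lemma integrable_mul [IsFiniteMeasure π] [IsFiniteMeasure ρ] [IsFiniteMeasure σ]
    (hπρ : ConcordanceLE π ρ) (hρσ : ConcordanceLE ρ σ)
    (hf : Monotone f) (hg : Monotone g) (hfm : Measurable f) (hgm : Measurable g)
    (hπ : Integrable (fun p => f p.1 * g p.2) π) (hσ : Integrable (fun p => f p.1 * g p.2) σ) :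
    Integrable (fun p => f p.1 * g p.2) ρ :=
  integrable_of_lintegral_ofReal_lt_top (by fun_prop)
    ((hρσ.lintegral_ofReal_mul_le hf hg hfm hgm).trans_lt hσ.lintegral_lt_top)
    ((hπρ.lintegral_ofReal_neg_mul_le hf hg hfm hgm).trans_lt hπ.neg.lintegral_lt_top)

lemma covar_le [IsFiniteMeasure π] [IsFiniteMeasure ρ] (h : ConcordanceLE π ρ)
    (hf : Monotone f) (hg : Monotone g) (hfm : Measurable f) (hgm : Measurable g)
    (hπ : Integrable (fun p => f p.1 * g p.2) π) (hρ : Integrable (fun p => f p.1 * g p.2) ρ) :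
    covar π (fun p => f p.1) (fun p => g p.2) ≤ covar ρ (fun p => f p.1) (fun p => g p.2) := by
  have integral_mul_le : ∫ p, f p.1 * g p.2 ∂π ≤ ∫ p, f p.1 * g p.2 ∂ρ :=
    integral_le_integral_of_lintegral_ofReal_le hπ hρ
      (h.lintegral_ofReal_mul_le hf hg hfm hgm) (h.lintegral_ofReal_neg_mul_le hf hg hfm hgm)
  have integral_fst (τ : Measure (α × β)) : ∫ p, f p.1 ∂τ = ∫ x, f x ∂τ.fst :=
    (integral_map measurable_fst.aemeasurable hfm.aestronglyMeasurable).symm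
  have integral_snd (τ : Measure (α × β)) : ∫ p, g p.2 ∂τ = ∫ y, g y ∂τ.snd :=
    (integral_map measurable_snd.aemeasurable hgm.aestronglyMeasurable).symm
  simp only [covar, integral_fst, integral_snd, h.fst_eq, h.snd_eq]
  gcongr

end ConcordanceLE

end Concordance

section FrechetBounds

variable {Ω α β : Type*} [MeasurableSpace Ω] [MeasurableSpace α] [MeasurableSpace β]
  {μ : Measure Ω}

lemma measure_prod_le_min_fst_snd (π : Measure (α × β)) {s : Set α} {t : Set β}
    (hs : MeasurableSet s) (ht : MeasurableSet t) : π (s ×ˢ t) ≤ min (π.fst s) (π.snd t) := by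
  rw [Measure.fst_apply hs, Measure.snd_apply ht]
  exact le_min (measure_mono fun _ hp => hp.1) (measure_mono fun _ hp => hp.2)

lemma map_prodMk_prod_eq_min_of_nested {X : Ω → α} {Y : Ω → β} (hX : Measurable X)
    (hY : Measurable Y) {s : Set α} {t : Set β} (hs : MeasurableSet s) (ht : MeasurableSet t)
    (h : X ⁻¹' s ⊆ Y ⁻¹' t ∨ Y ⁻¹' t ⊆ X ⁻¹' s) :
    μ.map (fun ω => (X ω, Y ω)) (s ×ˢ t) =
      min ((μ.map fun ω => (X ω, Y ω)).fst s) ((μ.map fun ω => (X ω, Y ω)).snd t) := by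
  rw [Measure.fst_map_prodMk hY, Measure.snd_map_prodMk hX, Measure.map_apply hX hs,
    Measure.map_apply hY ht, Measure.map_apply (hX.prodMk hY) (hs.prod ht), Set.mk_preimage_prod]
  rcases h with h | h
  · rw [Set.inter_eq_left.2 h, min_eq_left (measure_mono h)]
  · rw [Set.inter_eq_right.2 h, min_eq_right (measure_mono h)]

variable {X Y Y' : Ω → ℝ} {s t : Set ℝ}

lemma Comonotonic.map_prodMk_prod_eq_min (h : Comonotonic μ X Y) (hs : IsUpperSet s)
    (ht : IsUpperSet t) :
    μ.map (fun ω => (X ω, Y ω)) (s ×ˢ t) =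
      min ((μ.map fun ω => (X ω, Y ω)).fst s) ((μ.map fun ω => (X ω, Y ω)).snd t) := by
  obtain ⟨Z, ν₁, ν₂, hZ, hν₁, hν₂, law_eq⟩ := h
  rw [law_eq]
  exact map_prodMk_prod_eq_min_of_nested (hν₁.measurable.comp hZ) (hν₂.measurable.comp hZ)
    hs.ordConnected.measurableSet ht.ordConnected.measurableSet
    (((hs.preimage hν₁).total (ht.preimage hν₂)).imp (Set.preimage_mono (f := Z))
      (Set.preimage_mono (f := Z)))

lemma Countermonotonic.map_prodMk_prod_eq_min (h : Countermonotonic μ X Y) (hs : IsUpperSet s)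
    (ht : IsLowerSet t) :
    μ.map (fun ω => (X ω, Y ω)) (s ×ˢ t) =
      min ((μ.map fun ω => (X ω, Y ω)).fst s) ((μ.map fun ω => (X ω, Y ω)).snd t) := by
  obtain ⟨Z, ν₁, ν₂, hZ, hν₁, hν₂, law_eq⟩ := h
  have preimage_upper : IsUpperSet (ν₂ ⁻¹' t) := fun _ _ hab ha => ht (hν₂ hab) ha
  rw [law_eq]
  exact map_prodMk_prod_eq_min_of_nested (hν₁.measurable.comp hZ) (hν₂.measurable.comp hZ)
    hs.ordConnected.measurableSet ht.ordConnected.measurableSet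
    (((hs.preimage hν₁).total preimage_upper).imp (Set.preimage_mono (f := Z))
      (Set.preimage_mono (f := Z)))

lemma Comonotonic.concordanceLE (h : Comonotonic μ X Y) (hX : Measurable X) (hY : Measurable Y)
    (hY' : Measurable Y') (hlaw : μ.map Y = μ.map Y') :
    ConcordanceLE (μ.map fun ω => (X ω, Y' ω)) (μ.map fun ω => (X ω, Y ω)) := by
  have fst_eq : (μ.map fun ω => (X ω, Y' ω)).fst = (μ.map fun ω => (X ω, Y ω)).fst := by
    rw [Measure.fst_map_prodMk hY', Measure.fst_map_prodMk hY]
  have snd_eq : (μ.map fun ω => (X ω, Y' ω)).snd = (μ.map fun ω => (X ω, Y ω)).snd := by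
    rw [Measure.snd_map_prodMk hX, Measure.snd_map_prodMk hX, hlaw]
  refine ⟨fst_eq, snd_eq, fun s t hs ht hsu htu => ?_⟩
  rw [h.map_prodMk_prod_eq_min hsu htu, ← fst_eq, ← snd_eq]
  exact measure_prod_le_min_fst_snd _ hs ht

lemma Countermonotonic.concordanceLE [IsFiniteMeasure μ] (h : Countermonotonic μ X Y)
    (hX : Measurable X) (hY : Measurable Y) (hY' : Measurable Y') (hlaw : μ.map Y = μ.map Y') :
    ConcordanceLE (μ.map fun ω => (X ω, Y ω)) (μ.map fun ω => (X ω, Y' ω)) := by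
  have fst_eq : (μ.map fun ω => (X ω, Y ω)).fst = (μ.map fun ω => (X ω, Y' ω)).fst := by
    rw [Measure.fst_map_prodMk hY, Measure.fst_map_prodMk hY']
  have snd_eq : (μ.map fun ω => (X ω, Y ω)).snd = (μ.map fun ω => (X ω, Y' ω)).snd := by
    rw [Measure.snd_map_prodMk hX, Measure.snd_map_prodMk hX, hlaw]
  refine .of_measure_upper_prod_lower_le fst_eq snd_eq fun s t hs ht hsu htl => ?_
  rw [h.map_prodMk_prod_eq_min hsu htl, fst_eq, snd_eq]
  exact measure_prod_le_min_fst_snd _ hs ht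

end FrechetBounds

lemma covar_map {Ω Ω' : Type*} [MeasurableSpace Ω] [MeasurableSpace Ω'] {μ : Measure Ω}
    {φ : Ω → Ω'} {U V : Ω' → ℝ} (hφ : AEMeasurable φ μ) (hU : AEStronglyMeasurable U (μ.map φ))
    (hV : AEStronglyMeasurable V (μ.map φ)) :
    covar (μ.map φ) U V = covar μ (fun ω => U (φ ω)) (fun ω => V (φ ω)) := by
  have integral_mul : ∫ ω, U ω * V ω ∂(μ.map φ) = ∫ ω, U (φ ω) * V (φ ω) ∂μ :=
    integral_map hφ (hU.mul hV)
  simp only [covar]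
  rw [integral_mul, integral_map hφ hU, integral_map hφ hV]

theorem frechet_hoeffding_covariance_bounds
    {Ω : Type*} [MeasurableSpace Ω] (μ : Measure Ω) [IsProbabilityMeasure μ]
    (X Y Y' Y'' : Ω → ℝ)
    (hX : Measurable X) (hY : Measurable Y) (hY' : Measurable Y') (hY'' : Measurable Y'')
    (hid' : μ.map Y' = μ.map Y) (hid'' : μ.map Y'' = μ.map Y)
    (hcm : Countermonotonic μ X Y') (hco : Comonotonic μ X Y'')
    (g₁ g₂ : ℝ → ℝ) (hg₁ : Monotone g₁) (hg₂ : Monotone g₂)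
    (hiX : Integrable (fun ω => g₁ (X ω)) μ)
    (hiY : Integrable (fun ω => g₂ (Y ω)) μ)
    (hiY' : Integrable (fun ω => g₂ (Y' ω)) μ)
    (hiY'' : Integrable (fun ω => g₂ (Y'' ω)) μ)
    (hiP' : Integrable (fun ω => g₁ (X ω) * g₂ (Y' ω)) μ)
    (hiP'' : Integrable (fun ω => g₁ (X ω) * g₂ (Y'' ω)) μ) :
    Integrable (fun ω => g₁ (X ω) * g₂ (Y ω)) μ ∧
    covar μ (fun ω => g₁ (X ω)) (fun ω => g₂ (Y' ω))
      ≤ covar μ (fun ω => g₁ (X ω)) (fun ω => g₂ (Y ω)) ∧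
    covar μ (fun ω => g₁ (X ω)) (fun ω => g₂ (Y ω))
      ≤ covar μ (fun ω => g₁ (X ω)) (fun ω => g₂ (Y'' ω)) := by
  have hm₁ := hg₁.measurable
  have hm₂ := hg₂.measurable
  have law_lower := hcm.concordanceLE hX hY' hY hid'
  have law_upper := hco.concordanceLE hX hY'' hY hid''
  have integrable_law {T : Ω → ℝ} (hT : Measurable T) :
      Integrable (fun p : ℝ × ℝ => g₁ p.1 * g₂ p.2) (μ.map fun ω => (X ω, T ω)) ↔
        Integrable (fun ω => g₁ (X ω) * g₂ (T ω)) μ :=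
    integrable_map_measure (by fun_prop) (by fun_prop)
  have covar_law {T : Ω → ℝ} (hT : Measurable T) :
      covar (μ.map fun ω => (X ω, T ω)) (fun p => g₁ p.1) (fun p => g₂ p.2) =
        covar μ (fun ω => g₁ (X ω)) (fun ω => g₂ (T ω)) :=
    covar_map (by fun_prop) (hm₁.comp measurable_fst).aestronglyMeasurable
      (hm₂.comp measurable_snd).aestronglyMeasurable
  rw [← integrable_law hY'] at hiP'
  rw [← integrable_law hY''] at hiP''
  rw [← integrable_law hY, ← covar_law hY', ← covar_law hY, ← covar_law hY'']
  have hiP := law_lower.integrable_mul law_upper hg₁ hg₂ hm₁ hm₂ hiP' hiP''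
  exact ⟨hiP, law_lower.covar_le hg₁ hg₂ hm₁ hm₂ hiP' hiP,
    law_upper.covar_le hg₁ hg₂ hm₁ hm₂ hiP hiP''⟩
end

section
/- Let X, Y, Y', Y'' be real random variables on a common probability space such that Y, Y', Y'' are identically distributed, (X,Y') is countermonotonic, and (X,Y'') is comonotonic. Let g₁, g₂ : ℝ → ℝ be nondecreasing functions such that g₁∘X, g₂∘Y, g₂∘Y', g₂∘Y'' are integrable and the products (g₁∘X)·(g₂∘Y') and (g₁∘X)·(g₂∘Y'') are integrable. If neither g₁∘X nor g₂∘Y is almost surely constant, then Cov(g₁∘X, g₂∘Y') < 0 < Cov(g₁∘X, g₂∘Y''). -/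
open MeasureTheory

/-!
If `(U', V')` is an independent copy of `(U, V)`, then `2 Cov(U, V) = E[(U - U') (V - V')]`, and for
comonotonic `U` and `V` the integrand is nonnegative. If the covariance vanished, then almost surely
`U = U'` or `V = V'`; this forces `U` or `V` to be almost surely constant, because points of a
plane any two of which share a coordinate lie on a common horizontal or vertical line. The
countermonotonic case is the comonotonic one for `(U, -V)`.
-/

open Filter ProbabilityTheory

section IdentDistrib

variable {α β γ δ E F : Type*} [MeasurableSpace α] [MeasurableSpace β] [MeasurableSpace γ]
  [MeasurableSpace δ] [MeasurableSpace E] [MeasurableSpace F] {μ : Measure α} {ν : Measure β}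

theorem identDistrib_of_map_eq [NeZero ν] {f : α → E} {g : β → E} (hg : AEMeasurable g ν)
    (h : μ.map f = ν.map g) : IdentDistrib f g μ ν where
  aemeasurable_fst := aemeasurable_of_map_neZero
    ⟨h ▸ (Measure.map_ne_zero_iff hg).2 (NeZero.ne ν)⟩
  aemeasurable_snd := hg
  map_eq := h

theorem map_prodMk_comp_eq [NeZero ν] {X : α → E} {Y : α → F} {X' : β → E} {Y' : β → F}
    (h : μ.map (fun a => (X a, Y a)) = ν.map (fun b => (X' b, Y' b)))
    (hX' : Measurable X') (hY' : Measurable Y')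
    {f : E → γ} {g : F → δ} (hf : Measurable f) (hg : Measurable g) :
    μ.map (fun a => (f (X a), g (Y a))) = ν.map (fun b => (f (X' b), g (Y' b))) :=
  ((identDistrib_of_map_eq (hX'.prodMk hY').aemeasurable h).comp (hf.prodMap hg)).map_eq

theorem identDistrib_comp_fst {ρ : Measure γ} [IsProbabilityMeasure ρ] {f : α → E}
    (hf : AEMeasurable f μ) : IdentDistrib (fun p : α × γ => f p.1) f (μ.prod ρ) μ := by
  have hfst : IdentDistrib Prod.fst id (μ.prod ρ) μ :=
    ⟨measurable_fst.aemeasurable, aemeasurable_id, by simp⟩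
  exact hfst.comp_of_aemeasurable (by simpa using hf)

theorem identDistrib_comp_snd {ρ : Measure γ} [IsProbabilityMeasure ρ] [SFinite μ] {f : α → E}
    (hf : AEMeasurable f μ) : IdentDistrib (fun p : γ × α => f p.2) f (ρ.prod μ) μ := by
  have hsnd : IdentDistrib Prod.snd id (ρ.prod μ) μ :=
    ⟨measurable_snd.aemeasurable, aemeasurable_id, by simp⟩
  exact hsnd.comp_of_aemeasurable (by simpa using hf)

theorem identDistrib_prodMap [IsProbabilityMeasure μ] [IsProbabilityMeasure ν] {ρ : Measure γ}
    {σ : Measure δ} [IsProbabilityMeasure ρ] [IsProbabilityMeasure σ]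
    {f : α → E} {g : β → E} {f' : γ → F} {g' : δ → F}
    (h : IdentDistrib f g μ ν) (h' : IdentDistrib f' g' ρ σ) :
    IdentDistrib (Prod.map f f') (Prod.map g g') (μ.prod ρ) (ν.prod σ) :=
  IdentDistrib.prodMk
    ((identDistrib_comp_fst h.aemeasurable_fst).trans
      (h.trans (identDistrib_comp_fst h.aemeasurable_snd).symm))
    ((identDistrib_comp_snd h'.aemeasurable_fst).trans
      (h'.trans (identDistrib_comp_snd h'.aemeasurable_snd).symm))
    (indepFun_prod₀ h.aemeasurable_fst h'.aemeasurable_fst)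
    (indepFun_prod₀ h.aemeasurable_snd h'.aemeasurable_snd)

theorem eventuallyConst_ae_of_identDistrib [Nonempty E] [MeasurableSingletonClass E]
    {f : α → E} {g : β → E} (h : IdentDistrib f g μ ν) (hf : EventuallyConst f (ae μ)) :
    EventuallyConst g (ae ν) := by
  obtain ⟨c, hc⟩ := hf.eventuallyEq_const
  exact eventuallyConst_iff_exists_eventuallyEq.2
    ⟨c, h.ae_mem_snd (measurableSet_singleton c) hc⟩

end IdentDistrib

theorem eventuallyConst_ae_or_of_ae_prod {Ω α β : Type*} [MeasurableSpace Ω] {μ : Measure Ω}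
    [SFinite μ] {U : Ω → α} {V : Ω → β}
    (h : ∀ᵐ p ∂μ.prod μ, U p.1 = U p.2 ∨ V p.1 = V p.2) :
    EventuallyConst U (ae μ) ∨ EventuallyConst V (ae μ) := by
  have hsection : ∀ᵐ x ∂μ, ∀ᵐ y ∂μ, U x = U y ∨ V x = V y := Measure.ae_ae_of_ae_prod h
  rcases eq_zero_or_neZero μ with rfl | _
  · simp
  obtain ⟨x, hx⟩ := hsection.exists
  by_cases hU : ∀ᵐ y ∂μ, U y = U x
  · exact .inl (.congr (.const (U x)) (EventuallyEq.symm hU))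
  -- `x` and `y` lie on the line `V = V x`; a point off it would need both first coordinates.
  obtain ⟨y, hyx, hy, hxy⟩ := ((not_eventually.1 hU).and_eventually (hsection.and hx)).exists
  have hVxy : V x = V y := hxy.resolve_left (Ne.symm hyx)
  refine .inr (.congr (.const (V x)) ?_)
  filter_upwards [hx, hy] with z hxz hyz
  rcases hyz with hUyz | hVyz
  · exact hxz.resolve_left fun hUxz => hyx (hUyz.trans hUxz.symm)
  · exact hVxy.trans hVyz

section Covariance

variable {Ω : Type*} [MeasurableSpace Ω] {μ : Measure Ω} {U V : Ω → ℝ}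

theorem covar_neg_right : covar μ U (fun ω => -V ω) = -covar μ U V := by
  simp only [covar, mul_neg, integral_neg]
  ring

theorem integrable_prod_sub_mul_sub [IsFiniteMeasure μ] (hU : Integrable U μ)
    (hV : Integrable V μ) (hUV : Integrable (fun ω => U ω * V ω) μ) :
    Integrable (fun p : Ω × Ω => (U p.1 - U p.2) * (V p.1 - V p.2)) (μ.prod μ) := by
  have hexpand : (fun p : Ω × Ω => (U p.1 - U p.2) * (V p.1 - V p.2)) = fun p =>
      (U p.1 * V p.1 + U p.2 * V p.2) - (U p.1 * V p.2 + V p.1 * U p.2) := by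
    ext p
    ring
  rw [hexpand]
  exact ((hUV.comp_fst μ).add (hUV.comp_snd μ)).sub ((hU.mul_prod hV).add (hV.mul_prod hU))

theorem integral_prod_sub_mul_sub [IsProbabilityMeasure μ] (hU : Integrable U μ)
    (hV : Integrable V μ) (hUV : Integrable (fun ω => U ω * V ω) μ) :
    ∫ p : Ω × Ω, (U p.1 - U p.2) * (V p.1 - V p.2) ∂μ.prod μ = 2 * covar μ U V :=
  calc
    _ = ∫ p : Ω × Ω, (U p.1 * V p.1 + U p.2 * V p.2) -
          (U p.1 * V p.2 + V p.1 * U p.2) ∂μ.prod μ := by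
      congr with p
      ring
    _ = (∫ p : Ω × Ω, U p.1 * V p.1 ∂μ.prod μ + ∫ p : Ω × Ω, U p.2 * V p.2 ∂μ.prod μ) -
          (∫ p : Ω × Ω, U p.1 * V p.2 ∂μ.prod μ + ∫ p : Ω × Ω, V p.1 * U p.2 ∂μ.prod μ) := by
      rw [← integral_add (hUV.comp_fst μ) (hUV.comp_snd μ),
        ← integral_add (hU.mul_prod hV) (hV.mul_prod hU)]
      exact integral_sub ((hUV.comp_fst μ).add (hUV.comp_snd μ))
        ((hU.mul_prod hV).add (hV.mul_prod hU))
    _ = 2 * covar μ U V := by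
      rw [integral_fun_fst (fun ω => U ω * V ω), integral_fun_snd (fun ω => U ω * V ω),
        integral_prod_mul, integral_prod_mul, probReal_univ, one_smul, covar]
      ring

theorem covar_pos_of_ae_prod_nonneg [IsProbabilityMeasure μ] (hU : Integrable U μ)
    (hV : Integrable V μ) (hUV : Integrable (fun ω => U ω * V ω) μ)
    (hnonneg : ∀ᵐ p ∂μ.prod μ, 0 ≤ (U p.1 - U p.2) * (V p.1 - V p.2))
    (hncU : ¬ EventuallyConst U (ae μ)) (hncV : ¬ EventuallyConst V (ae μ)) :
    0 < covar μ U V := by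
  have hint := integral_prod_sub_mul_sub hU hV hUV
  have hcov : 0 ≤ covar μ U V := by linarith [integral_nonneg_of_ae hnonneg]
  refine hcov.lt_of_ne' fun hzero => not_or_intro hncU hncV (eventuallyConst_ae_or_of_ae_prod ?_)
  rw [hzero, mul_zero, integral_eq_zero_iff_of_nonneg_ae hnonneg
    (integrable_prod_sub_mul_sub hU hV hUV)] at hint
  filter_upwards [hint] with p hp
  simpa only [Pi.zero_apply, mul_eq_zero, sub_eq_zero] using hp

end Covariance

section Comonotonic

variable {Ω : Type*} [MeasurableSpace Ω] {μ : Measure Ω} {X Y : Ω → ℝ} {f g : ℝ → ℝ}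

theorem Comonotonic.comp [NeZero μ] (h : Comonotonic μ X Y) (hf : Monotone f)
    (hg : Monotone g) : Comonotonic μ (fun ω => f (X ω)) (fun ω => g (Y ω)) := by
  obtain ⟨Z, ν₁, ν₂, hZ, hν₁, hν₂, hmap⟩ := h
  exact ⟨Z, f ∘ ν₁, g ∘ ν₂, hZ, hf.comp hν₁, hg.comp hν₂,
    map_prodMk_comp_eq hmap (hν₁.measurable.comp hZ) (hν₂.measurable.comp hZ)
      hf.measurable hg.measurable⟩

theorem Countermonotonic.comp [NeZero μ] (h : Countermonotonic μ X Y) (hf : Monotone f)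
    (hg : Monotone g) : Countermonotonic μ (fun ω => f (X ω)) (fun ω => g (Y ω)) := by
  obtain ⟨Z, ν₁, ν₂, hZ, hν₁, hν₂, hmap⟩ := h
  exact ⟨Z, f ∘ ν₁, g ∘ ν₂, hZ, hf.comp hν₁, hg.comp_antitone hν₂,
    map_prodMk_comp_eq hmap (hν₁.measurable.comp hZ) (hν₂.measurable.comp hZ)
      hf.measurable hg.measurable⟩

theorem Countermonotonic.neg_right [NeZero μ] (h : Countermonotonic μ X Y) :
    Comonotonic μ X (fun ω => -Y ω) := by
  obtain ⟨Z, ν₁, ν₂, hZ, hν₁, hν₂, hmap⟩ := h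
  exact ⟨Z, ν₁, -ν₂, hZ, hν₁, hν₂.neg,
    map_prodMk_comp_eq hmap (hν₁.measurable.comp hZ) (hν₂.measurable.comp hZ)
      measurable_id measurable_neg⟩

theorem Comonotonic.ae_prod_sub_mul_sub_nonneg [IsProbabilityMeasure μ] (h : Comonotonic μ X Y) :
    ∀ᵐ p ∂μ.prod μ, 0 ≤ (X p.1 - X p.2) * (Y p.1 - Y p.2) := by
  obtain ⟨Z, ν₁, ν₂, hZ, hν₁, hν₂, hmap⟩ := h
  have hlaw := identDistrib_of_map_eq
    ((hν₁.measurable.comp hZ).prodMk (hν₂.measurable.comp hZ)).aemeasurable hmap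
  have hmeas : MeasurableSet
      {q : (ℝ × ℝ) × (ℝ × ℝ) | 0 ≤ (q.1.1 - q.2.1) * (q.1.2 - q.2.2)} :=
    measurableSet_le measurable_const (by fun_prop)
  exact (identDistrib_prodMap hlaw hlaw).symm.ae_mem_snd hmeas
    (.of_forall fun p => (hν₁.monovary hν₂).sub_mul_sub_nonneg (Z p.2) (Z p.1))

theorem Comonotonic.covar_pos [IsProbabilityMeasure μ] (h : Comonotonic μ X Y)
    (hX : Integrable X μ) (hY : Integrable Y μ) (hXY : Integrable (fun ω => X ω * Y ω) μ)
    (hncX : ¬ EventuallyConst X (ae μ)) (hncY : ¬ EventuallyConst Y (ae μ)) :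
    0 < covar μ X Y :=
  covar_pos_of_ae_prod_nonneg hX hY hXY h.ae_prod_sub_mul_sub_nonneg hncX hncY

theorem Countermonotonic.covar_neg [IsProbabilityMeasure μ] (h : Countermonotonic μ X Y)
    (hX : Integrable X μ) (hY : Integrable Y μ) (hXY : Integrable (fun ω => X ω * Y ω) μ)
    (hncX : ¬ EventuallyConst X (ae μ)) (hncY : ¬ EventuallyConst Y (ae μ)) :
    covar μ X Y < 0 := by
  rw [← neg_pos, ← covar_neg_right]
  have hXY_neg : Integrable (fun ω => X ω * -Y ω) μ := by
    simpa only [mul_neg] using hXY.fun_neg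
  have hncY_neg : ¬ EventuallyConst (fun ω => -Y ω) (ae μ) := fun hconst =>
    hncY (by simpa only [Function.comp_def, neg_neg] using hconst.comp Neg.neg)
  exact h.neg_right.covar_pos hX hY.neg hXY_neg hncX hncY_neg

end Comonotonic

theorem frechet_hoeffding_covariance_bounds_strict
    {Ω : Type*} [MeasurableSpace Ω] (μ : Measure Ω) [IsProbabilityMeasure μ]
    (X Y Y' Y'' : Ω → ℝ)
    (hX : Measurable X) (hY : Measurable Y) (hY' : Measurable Y') (hY'' : Measurable Y'')
    (hid' : μ.map Y' = μ.map Y) (hid'' : μ.map Y'' = μ.map Y)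
    (hcm : Countermonotonic μ X Y') (hco : Comonotonic μ X Y'')
    (g₁ g₂ : ℝ → ℝ) (hg₁ : Monotone g₁) (hg₂ : Monotone g₂)
    (hiX : Integrable (fun ω => g₁ (X ω)) μ)
    (hiY : Integrable (fun ω => g₂ (Y ω)) μ)
    (hiY' : Integrable (fun ω => g₂ (Y' ω)) μ)
    (hiY'' : Integrable (fun ω => g₂ (Y'' ω)) μ)
    (hiP' : Integrable (fun ω => g₁ (X ω) * g₂ (Y' ω)) μ)
    (hiP'' : Integrable (fun ω => g₁ (X ω) * g₂ (Y'' ω)) μ)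
    (hncX : ∀ c : ℝ, ¬ ((fun ω => g₁ (X ω)) =ᵐ[μ] fun _ => c))
    (hncY : ∀ c : ℝ, ¬ ((fun ω => g₂ (Y ω)) =ᵐ[μ] fun _ => c)) :
    covar μ (fun ω => g₁ (X ω)) (fun ω => g₂ (Y' ω)) < 0 ∧
    0 < covar μ (fun ω => g₁ (X ω)) (fun ω => g₂ (Y'' ω)) := by
  have hncX' : ¬ EventuallyConst (fun ω => g₁ (X ω)) (ae μ) := fun hconst =>
    hconst.eventuallyEq_const.elim hncX
  have hncY_of_map_eq (W : Ω → ℝ) (hW : Measurable W) (hid : μ.map W = μ.map Y) :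
      ¬ EventuallyConst (fun ω => g₂ (W ω)) (ae μ) := fun hconst => by
    have hlaw : IdentDistrib W Y μ μ := ⟨hW.aemeasurable, hY.aemeasurable, hid⟩
    have hconstY : EventuallyConst (fun ω => g₂ (Y ω)) (ae μ) :=
      eventuallyConst_ae_of_identDistrib (hlaw.comp hg₂.measurable) hconst
    exact hconstY.eventuallyEq_const.elim hncY
  exact ⟨(hcm.comp hg₁ hg₂).covar_neg hiX hiY' hiP' hncX' (hncY_of_map_eq Y' hY' hid'),
    (hco.comp hg₁ hg₂).covar_pos hiX hiY'' hiP'' hncX' (hncY_of_map_eq Y'' hY'' hid'')⟩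
end

section
/- Let X, Y be real random variables on a common probability space. Then (X,Y) is countermonotonic if and only if P(X ≤ a, Y ≤ b) = max(F_X(a) + F_Y(b) − 1, 0) for all a, b ∈ ℝ, i.e., if and only if the CDF correlation of X and Y is identically equal to −1 (the joint CDF attains the lower Fréchet–Hoeffding bound everywhere). -/
open MeasureTheory

/-- The CDF of a real random variable `X` under `μ`. -/
noncomputable def cdfF {Ω : Type*} [MeasurableSpace Ω] (μ : Measure Ω)
    (X : Ω → ℝ) (x : ℝ) : ℝ :=
  (μ {ω | X ω ≤ x}).toReal

/-!
Both conditions say that `X` and `Y` are oppositely ordered on some almost sure event `s`.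

* For a single point `(a, b)`, inclusion-exclusion shows that the lower bound is attained iff one of
  the quadrants `{X ≤ a, Y ≤ b}`, `{X > a, Y > b}` is null. Discarding the null quadrants whose
  corners lie in a countable order-dense set leaves an almost sure event without a strictly
  increasing pair of values, and conversely one of the two quadrants at `(a, b)` always misses such
  an event.
* Rotate the plane by 45 degrees: `X` and `Y` are oppositely ordered on `s` iff `X + Y` is a
  1-Lipschitz function of `X - Y` there. This function extends to a 1-Lipschitz function `h` on the
  line, and then `t ↦ (h t + t) / 2` and `t ↦ (h t - t) / 2` are monotone and antitone and recover
  `X` and `Y` from `Z = X - Y`.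
-/

open Set Filter TopologicalSpace ProbabilityTheory

lemma probReal_inter_eq_max_iff {Ω : Type*} [MeasurableSpace Ω] {μ : Measure Ω}
    [IsProbabilityMeasure μ] {A B : Set Ω} (hA : NullMeasurableSet A μ)
    (hB : NullMeasurableSet B μ) :
    μ.real (A ∩ B) = max (μ.real A + μ.real B - 1) 0 ↔ μ (A ∩ B) = 0 ∨ μ (Aᶜ ∩ Bᶜ) = 0 := by
  have incl_excl : μ.real A + μ.real B - 1 = μ.real (A ∩ B) - μ.real (Aᶜ ∩ Bᶜ) := by
    rw [← compl_union, probReal_compl_eq_one_sub₀ (hA.union hB),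
      ← measureReal_union_add_inter₀ hB]
    ring
  have hinter : 0 ≤ μ.real (A ∩ B) := measureReal_nonneg
  have hcompl : 0 ≤ μ.real (Aᶜ ∩ Bᶜ) := measureReal_nonneg
  rw [incl_excl, ← measureReal_eq_zero_iff, ← measureReal_eq_zero_iff]
  grind

lemma exists_countable_forall_lt_exists_le_lt (α : Type*) [LinearOrder α] [TopologicalSpace α]
    [OrderTopology α] [SecondCountableTopology α] :
    ∃ D : Set α, D.Countable ∧ ∀ x y : α, x < y → ∃ d ∈ D, x ≤ d ∧ d < y := by
  obtain ⟨D, hD, hdense⟩ := exists_countable_dense α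
  refine ⟨D ∪ {x | ∃ y, x ⋖ y}, hD.union countable_setOfPred_covBy_right, fun x y hxy ↦ ?_⟩
  by_cases hcov : x ⋖ y
  · exact ⟨x, .inr ⟨y, hcov⟩, le_rfl, hxy⟩
  · obtain ⟨z, hxz, hzy⟩ := (not_covBy_iff hxy).1 hcov
    obtain ⟨d, hd, hxd, hdy⟩ := hdense.exists_mem_open isOpen_Ioo ⟨z, hxz, hzy⟩
    exact ⟨d, .inl hd, hxd.le, hdy⟩

section OppositelyOrdered

variable {Ω Ω' α β : Type*} [MeasurableSpace Ω] [MeasurableSpace Ω'] {μ : Measure Ω}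
  {μ' : Measure Ω'} [LinearOrder α] [LinearOrder β]

lemma measure_quadrant_eq_zero_or_of_antivaryOn {X : Ω → α} {Y : Ω → β} {s : Set Ω}
    (hs : s ∈ ae μ) (hXY : AntivaryOn Y X s) (a : α) (b : β) :
    μ (X ⁻¹' Iic a ∩ Y ⁻¹' Iic b) = 0 ∨ μ (X ⁻¹' Ioi a ∩ Y ⁻¹' Ioi b) = 0 := by
  by_cases h : ∃ ω ∈ s, X ω ≤ a ∧ Y ω ≤ b
  · obtain ⟨ω, hω, hXa, hYb⟩ := h
    refine .inr (measure_mono_null (t := sᶜ) (fun ω' ⟨hXa', hYb'⟩ hω' ↦ ?_) hs)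
    exact (hXY hω hω' (hXa.trans_lt hXa')).not_gt (hYb.trans_lt hYb')
  · exact .inl (measure_mono_null (t := sᶜ) (fun ω hω hωs ↦ h ⟨ω, hωs, hω⟩) hs)

variable [TopologicalSpace α] [OrderTopology α] [SecondCountableTopology α]
  [TopologicalSpace β] [OrderTopology β] [SecondCountableTopology β]

theorem exists_antivaryOn_iff_measure_quadrant_eq_zero {X : Ω → α} {Y : Ω → β} :
    (∃ s ∈ ae μ, AntivaryOn Y X s) ↔
      ∀ a b, μ (X ⁻¹' Iic a ∩ Y ⁻¹' Iic b) = 0 ∨ μ (X ⁻¹' Ioi a ∩ Y ⁻¹' Ioi b) = 0 := by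
  refine ⟨fun ⟨_, hs, hXY⟩ ↦ measure_quadrant_eq_zero_or_of_antivaryOn hs hXY, fun hnull ↦ ?_⟩
  obtain ⟨D, hD, hDsep⟩ := exists_countable_forall_lt_exists_le_lt α
  obtain ⟨E, hE, hEsep⟩ := exists_countable_forall_lt_exists_le_lt β
  have havoid : ∀ᵐ ω ∂μ, ∀ a ∈ D, ∀ b ∈ E,
      (μ (X ⁻¹' Iic a ∩ Y ⁻¹' Iic b) = 0 → ω ∉ X ⁻¹' Iic a ∩ Y ⁻¹' Iic b) ∧
      (μ (X ⁻¹' Ioi a ∩ Y ⁻¹' Ioi b) = 0 → ω ∉ X ⁻¹' Ioi a ∩ Y ⁻¹' Ioi b) :=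
    (ae_ball_iff hD).2 fun a _ ↦ (ae_ball_iff hE).2 fun b _ ↦
      (eventually_imp_distrib_left.2 measure_eq_zero_iff_ae_notMem.1).and
        (eventually_imp_distrib_left.2 measure_eq_zero_iff_ae_notMem.1)
  refine ⟨_, havoid, fun ω hω ω' hω' hX ↦ ?_⟩
  by_contra! hY
  obtain ⟨a, ha, hωa, haω'⟩ := hDsep _ _ hX
  obtain ⟨b, hb, hωb, hbω'⟩ := hEsep _ _ hY
  rcases hnull a b with hlower | hupper
  · exact (hω a ha b hb).1 hlower ⟨hωa, hωb⟩
  · exact (hω' a ha b hb).2 hupper ⟨haω', hbω'⟩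

lemma exists_antivaryOn_of_identDistrib [MeasurableSpace α] [OpensMeasurableSpace α]
    [MeasurableSpace β] [OpensMeasurableSpace β] {X : Ω → α} {Y : Ω → β} {X' : Ω' → α}
    {Y' : Ω' → β}
    (hlaw : IdentDistrib (fun ω ↦ (X ω, Y ω)) (fun ω ↦ (X' ω, Y' ω)) μ μ')
    (h : ∃ s ∈ ae μ', AntivaryOn Y' X' s) : ∃ s ∈ ae μ, AntivaryOn Y X s := by
  have measure_rect {u : Set α} {v : Set β} (hu : MeasurableSet u) (hv : MeasurableSet v) :
      μ (X ⁻¹' u ∩ Y ⁻¹' v) = μ' (X' ⁻¹' u ∩ Y' ⁻¹' v) :=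
    hlaw.measure_mem_eq (hu.prod hv)
  rw [exists_antivaryOn_iff_measure_quadrant_eq_zero] at h ⊢
  intro a b
  rw [measure_rect measurableSet_Iic measurableSet_Iic,
    measure_rect measurableSet_Ioi measurableSet_Ioi]
  exact h a b

end OppositelyOrdered

lemma exists_lipschitzWith_forall_eq {ι α : Type*} [PseudoMetricSpace α] {z : ι → α} {f : ι → ℝ}
    {K : NNReal} (hf : ∀ i j, dist (f i) (f j) ≤ K * dist (z i) (z j)) :
    ∃ h : α → ℝ, LipschitzWith K h ∧ ∀ i, h (z i) = f i := by
  have hfactor : f.FactorsThrough z := fun i j hij ↦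
    dist_le_zero.1 ((hf i j).trans_eq (by rw [hij, dist_self, mul_zero]))
  have hlip : LipschitzOnWith K (Function.extend z f 0) (range z) := by
    refine .of_dist_le_mul ?_
    rintro _ ⟨i, rfl⟩ _ ⟨j, rfl⟩
    simpa only [hfactor.extend_apply] using hf i j
  obtain ⟨h, hh, heq⟩ := hlip.extend_real
  exact ⟨h, hh, fun i ↦ (heq (mem_range_self i)).symm.trans (hfactor.extend_apply _ i)⟩

lemma antivaryOn_iff_dist_add_le_dist_sub {ι : Type*} {x y : ι → ℝ} {s : Set ι} :
    AntivaryOn y x s ↔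
      ∀ i ∈ s, ∀ j ∈ s, dist (x i + y i) (x j + y j) ≤ dist (x i - y i) (x j - y j) := by
  rw [antivaryOn_iff_forall_mul_nonpos]
  refine forall₂_congr fun i _ ↦ forall₂_congr fun j _ ↦ ?_
  rw [Real.dist_eq, Real.dist_eq, ← sq_le_sq]
  constructor <;> intro h <;> linarith

theorem exists_monotone_antitone_of_antivaryOn {ι : Type*} {x y : ι → ℝ} {s : Set ι}
    (hxy : AntivaryOn y x s) :
    ∃ f g : ℝ → ℝ, Monotone f ∧ Antitone g ∧
      ∀ i ∈ s, f (x i - y i) = x i ∧ g (x i - y i) = y i := by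
  obtain ⟨h, hlip, heq⟩ := exists_lipschitzWith_forall_eq (K := 1)
    (z := fun i : s ↦ x i - y i) (f := fun i ↦ x i + y i) fun i j ↦ by
      simpa only [NNReal.coe_one, one_mul] using
        antivaryOn_iff_dist_add_le_dist_sub.1 hxy i i.2 j j.2
  have habs {t u : ℝ} (htu : t ≤ u) : |h u - h t| ≤ u - t := by
    simpa only [Real.dist_eq, NNReal.coe_one, one_mul, abs_of_nonneg (sub_nonneg.2 htu)] using
      hlip.dist_le_mul u t
  refine ⟨fun t ↦ (h t + t) / 2, fun t ↦ (h t - t) / 2, fun t u htu ↦ ?_, fun t u htu ↦ ?_,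
    fun i hi ↦ ?_⟩
  · linarith [(abs_le.1 (habs htu)).1]
  · linarith [(abs_le.1 (habs htu)).2]
  · have hi' : h (x i - y i) = x i + y i := heq ⟨i, hi⟩
    constructor <;> linarith

theorem countermonotonic_iff_exists_antivaryOn {Ω : Type*} [MeasurableSpace Ω] {μ : Measure Ω}
    {X Y : Ω → ℝ} (hX : AEMeasurable X μ) (hY : AEMeasurable Y μ) :
    Countermonotonic μ X Y ↔ ∃ s ∈ ae μ, AntivaryOn Y X s := by
  constructor
  · rintro ⟨Z, ν₁, ν₂, hZ, hν₁, hν₂, hlaw⟩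
    have hmeas : Measurable fun ω ↦ (ν₁ (Z ω), ν₂ (Z ω)) :=
      (hν₁.measurable.comp hZ).prodMk (hν₂.measurable.comp hZ)
    exact exists_antivaryOn_of_identDistrib ⟨hX.prodMk hY, hmeas.aemeasurable, hlaw⟩
      ⟨univ, univ_mem, ((hν₂.antivary hν₁).comp_right Z).antivaryOn univ⟩
  · rintro ⟨s, hs, hXY⟩
    obtain ⟨ν₁, ν₂, hν₁, hν₂, heq⟩ := exists_monotone_antitone_of_antivaryOn hXY
    have hsub : AEMeasurable (fun ω ↦ X ω - Y ω) μ := hX.sub hY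
    refine ⟨hsub.mk _, ν₁, ν₂, hsub.measurable_mk, hν₁, hν₂, Measure.map_congr ?_⟩
    filter_upwards [hs, hsub.ae_eq_mk] with ω hω hZ
    rw [← hZ, (heq ω hω).1, (heq ω hω).2]

theorem countermonotonic_iff_lower_frechet_hoeffding_general
    {Ω : Type*} [MeasurableSpace Ω] (μ : Measure Ω) [IsProbabilityMeasure μ]
    (X Y : Ω → ℝ) (hX : AEMeasurable X μ) (hY : AEMeasurable Y μ) :
    Countermonotonic μ X Y ↔
      ∀ a b : ℝ, (μ {ω | X ω ≤ a ∧ Y ω ≤ b}).toReal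
        = max (cdfF μ X a + cdfF μ Y b - 1) 0 := by
  rw [countermonotonic_iff_exists_antivaryOn hX hY,
    exists_antivaryOn_iff_measure_quadrant_eq_zero]
  refine forall₂_congr fun a b ↦ ?_
  rw [← compl_Iic, ← compl_Iic, preimage_compl, preimage_compl]
  exact (probReal_inter_eq_max_iff (hX.nullMeasurable measurableSet_Iic)
    (hY.nullMeasurable measurableSet_Iic)).symm

theorem countermonotonic_iff_lower_frechet_hoeffding
    {Ω : Type*} [MeasurableSpace Ω] (μ : Measure Ω) [IsProbabilityMeasure μ]
    (X Y : Ω → ℝ) (hX : Measurable X) (hY : Measurable Y) :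
    Countermonotonic μ X Y ↔
      ∀ a b : ℝ, (μ {ω | X ω ≤ a ∧ Y ω ≤ b}).toReal
        = max (cdfF μ X a + cdfF μ Y b - 1) 0 :=
  countermonotonic_iff_lower_frechet_hoeffding_general μ X Y hX.aemeasurable hY.aemeasurable
end

section
/- Let X, Y be real random variables on a common probability space. Then X and Y are independent if and only if the quantile covariance vanishes at all levels, i.e., if and only if P(X ≤ q_α(X), Y ≤ q_β(Y)) = F_X(q_α(X))·F_Y(q_β(Y)) for all α, β ∈ (0,1). -/
open MeasureTheory

/-- The lower α-quantile of `X` under `μ`. -/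
noncomputable def lquant {Ω : Type*} [MeasurableSpace Ω] (μ : Measure Ω)
    (X : Ω → ℝ) (α : ℝ) : ℝ :=
  sInf {x : ℝ | α ≤ cdfF μ X x}

/-!
Independence of `X` and `Y` only has to be tested on half-lines `Iic x`, `Iic y`. Let `F`, `G` be
the CDFs. The infimum defining a quantile is attained, so the quantile `q` of `X` at level `F x`
satisfies `q ≤ x` and `F x ≤ F q`. The nested events `{X ≤ q} ⊆ {X ≤ x}` are therefore almost surely
equal, and the hypothesis at the levels `F x`, `G y` is the factorization at `(x, y)`. The levels
`0` and `1`, at which nothing is assumed, belong to almost surely trivial events, and these are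
independent of everything.
-/

open ProbabilityTheory Set

lemma isLeast_csInf_setOf_le_stieltjesFunction {R : Type*} [ConditionallyCompleteLinearOrder R]
    [TopologicalSpace R] [OrderTopology R] [DenselyOrdered R] [NoMaxOrder R]
    (f : StieltjesFunction R) {a : ℝ} (hne : {x | a ≤ f x}.Nonempty)
    (hbdd : BddBelow {x | a ≤ f x}) : IsLeast {x | a ≤ f x} (sInf {x | a ≤ f x}) := by
  refine ⟨?_, fun x hx ↦ csInf_le hbdd hx⟩
  rw [mem_ofPred_eq, ← f.iInf_Ioi_eq]
  refine le_ciInf fun ⟨z, hz⟩ ↦ ?_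
  obtain ⟨w, hw, hwz⟩ := exists_lt_of_csInf_lt hne hz
  exact hw.trans (f.mono hwz.le)

lemma bddBelow_setOf_le_cdf (ν : Measure ℝ) {a : ℝ} (ha : 0 < a) :
    BddBelow {x | a ≤ cdf ν x} := by
  obtain ⟨b, hb⟩ := ((tendsto_cdf_atBot ν).eventually_lt_const ha).exists
  exact ⟨b, fun x hx ↦ ((monotone_cdf ν).reflect_lt (hb.trans_le hx)).le⟩

lemma comap_eq_generateFrom_preimage_Iic {Ω E : Type*} [LinearOrder E] [TopologicalSpace E]
    [OrderTopology E] [SecondCountableTopology E] [mE : MeasurableSpace E] [BorelSpace E]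
    (X : Ω → E) :
    mE.comap X = MeasurableSpace.generateFrom (preimage X '' range Iic) := by
  rw [← MeasurableSpace.comap_generateFrom, ← borel_eq_generateFrom_Iic,
    BorelSpace.measurable_eq (α := E)]

section

variable {Ω : Type*} [MeasurableSpace Ω] {μ : Measure Ω}

lemma measureReal_inter_eq_mul_of_eq_zero_or_one [IsProbabilityMeasure μ] {s : Set Ω}
    (hs : NullMeasurableSet s μ) (h : μ.real s = 0 ∨ μ.real s = 1) (t : Set Ω) :
    μ.real (s ∩ t) = μ.real s * μ.real t := by
  rcases h with h0 | h1
  · rw [h0, zero_mul, measureReal_mono_null inter_subset_left h0]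
  · have hs_ae : s =ᵐ[μ] univ := (ae_eq_univ_iff_measure_eq hs).mpr <|
      (measureReal_eq_measureReal_iff (ν := μ)).mp (h1.trans probReal_univ.symm)
    rw [h1, one_mul, measureReal_congr (hs_ae.inter (ae_eq_refl t)), univ_inter]

lemma indepFun_iff_measureReal_preimage_Iic_inter_eq_mul [IsZeroOrProbabilityMeasure μ]
    {E F : Type*}
    [LinearOrder E] [TopologicalSpace E] [OrderTopology E] [SecondCountableTopology E]
    [MeasurableSpace E] [BorelSpace E]
    [LinearOrder F] [TopologicalSpace F] [OrderTopology F] [SecondCountableTopology F]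
    [MeasurableSpace F] [BorelSpace F]
    {X : Ω → E} {Y : Ω → F} (hX : Measurable X) (hY : Measurable Y) :
    IndepFun X Y μ ↔ ∀ x y, μ.real (X ⁻¹' Iic x ∩ Y ⁻¹' Iic y) =
      μ.real (X ⁻¹' Iic x) * μ.real (Y ⁻¹' Iic y) := by
  simp_rw [measureReal_def, ← ENNReal.toReal_mul, ENNReal.toReal_eq_toReal_iff'
    (measure_ne_top μ _) (ENNReal.mul_ne_top (measure_ne_top μ _) (measure_ne_top μ _))]
  refine ⟨fun h x y ↦ h.measure_inter_preimage_eq_mul _ _ measurableSet_Iic measurableSet_Iic,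
    fun h ↦ ?_⟩
  rw [IndepFun_iff_Indep]
  refine IndepSets.indep hX.comap_le hY.comap_le (isPiSystem_Iic.comap X) (isPiSystem_Iic.comap Y)
    (comap_eq_generateFrom_preimage_Iic X) (comap_eq_generateFrom_preimage_Iic Y)
    ((IndepSets_iff _ _ _).mpr ?_)
  rintro _ _ ⟨_, ⟨x, rfl⟩, rfl⟩ ⟨_, ⟨y, rfl⟩, rfl⟩
  exact h x y

variable [IsProbabilityMeasure μ] {X : Ω → ℝ}

lemma cdfF_eq_cdf_map (hX : AEMeasurable X μ) : cdfF μ X = cdf (μ.map X) := by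
  have := Measure.isProbabilityMeasure_map hX
  ext x
  rw [cdf_eq_real, map_measureReal_apply_of_aemeasurable hX measurableSet_Iic]
  rfl

lemma isLeast_lquant (hX : AEMeasurable X μ) {α : ℝ} (hα : 0 < α)
    (hne : {x | α ≤ cdfF μ X x}.Nonempty) :
    IsLeast {x | α ≤ cdfF μ X x} (lquant μ X α) := by
  rw [lquant]
  rw [cdfF_eq_cdf_map hX] at hne ⊢
  exact isLeast_csInf_setOf_le_stieltjesFunction _ hne (bddBelow_setOf_le_cdf _ hα)

lemma preimage_Iic_lquant_cdfF_ae_eq (hX : AEMeasurable X μ) {x : ℝ} (hx : 0 < cdfF μ X x) :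
    X ⁻¹' Iic (lquant μ X (cdfF μ X x)) =ᵐ[μ] X ⁻¹' Iic x := by
  have hleast := isLeast_lquant hX hx ⟨x, le_refl (cdfF μ X x)⟩
  have hle : lquant μ X (cdfF μ X x) ≤ x := hleast.2 (le_refl (cdfF μ X x))
  have hmeasure : μ (X ⁻¹' Iic x) ≤ μ (X ⁻¹' Iic (lquant μ X (cdfF μ X x))) :=
    (ENNReal.toReal_le_toReal (measure_ne_top _ _) (measure_ne_top _ _)).mp hleast.1
  exact ae_eq_of_subset_of_measure_ge (preimage_mono (Iic_subset_Iic.mpr hle)) hmeasure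
    (hX.nullMeasurableSet_preimage measurableSet_Iic) (measure_ne_top _ _)

lemma cdfF_eq_zero_or_one_or_mem_Ioo (X : Ω → ℝ) (x : ℝ) :
    (cdfF μ X x = 0 ∨ cdfF μ X x = 1) ∨ cdfF μ X x ∈ Ioo 0 1 :=
  or_assoc.mpr (eq_endpoints_or_mem_Ioo_of_mem_Icc ⟨measureReal_nonneg, measureReal_le_one⟩)

end

theorem indepFun_iff_quantile_covariance_vanishes
    {Ω : Type*} [MeasurableSpace Ω] (μ : Measure Ω) [IsProbabilityMeasure μ]
    (X Y : Ω → ℝ) (hX : Measurable X) (hY : Measurable Y) :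
    ProbabilityTheory.IndepFun X Y μ ↔
      ∀ α ∈ Set.Ioo (0 : ℝ) 1, ∀ β ∈ Set.Ioo (0 : ℝ) 1,
        (μ {ω | X ω ≤ lquant μ X α ∧ Y ω ≤ lquant μ Y β}).toReal
          = cdfF μ X (lquant μ X α) * cdfF μ Y (lquant μ Y β) := by
  rw [indepFun_iff_measureReal_preimage_Iic_inter_eq_mul hX hY]
  refine ⟨fun h α _ β _ ↦ h _ _, fun h x y ↦ ?_⟩
  rcases cdfF_eq_zero_or_one_or_mem_Ioo (μ := μ) X x with hx | hx
  · exact measureReal_inter_eq_mul_of_eq_zero_or_one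
      (hX measurableSet_Iic).nullMeasurableSet hx _
  rcases cdfF_eq_zero_or_one_or_mem_Ioo (μ := μ) Y y with hy | hy
  · rw [inter_comm, mul_comm]
    exact measureReal_inter_eq_mul_of_eq_zero_or_one
      (hY measurableSet_Iic).nullMeasurableSet hy _
  have hX_ae := preimage_Iic_lquant_cdfF_ae_eq hX.aemeasurable hx.1
  have hY_ae := preimage_Iic_lquant_cdfF_ae_eq hY.aemeasurable hy.1
  rw [← measureReal_congr (hX_ae.inter hY_ae), ← measureReal_congr hX_ae,
    ← measureReal_congr hY_ae]
  exact h _ hx _ hy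
end

section
/- Let X, Y be real random variables on a common probability space and let g₁, g₂ : ℝ → ℝ be nondecreasing functions such that g₁∘X, g₂∘Y, and (g₁∘X)·(g₂∘Y) are integrable. If X and Y are globally positively dependent, then Cov(g₁∘X, g₂∘Y) ≥ 0; if X and Y are globally negatively dependent, then Cov(g₁∘X, g₂∘Y) ≤ 0. In particular, every generalised covariance Cov_{T₁,T₂}(X,Y) is nonnegative (nonpositive) under global positive (negative) dependence. -/
open MeasureTheory

open Set Filter Topology

/-!
Averaging `(U ω - U ω') * (V ω - V ω')` over two independent copies gives twice the covariance of
`U` and `V`. Since `u' - u = ∫ s, (𝟙[u ≤ s] - 𝟙[u' ≤ s])`, Fubini's theorem turns this into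
Hoeffding's formula: the covariance is the integral of
`P(U ≤ s, V ≤ t) - P(U ≤ s) P(V ≤ t)` over the plane. For `U = g₁ ∘ X` and `V = g₂ ∘ Y` the events
in the integrand are preimages under `X` and `Y` of lower sets, which are increasing unions of
sets `Iic a`, so the sign prescribed by the dependence of `X` and `Y` passes to the integrand.
-/

section EventCovar

variable {Ω : Type*} [MeasurableSpace Ω]

/-- The covariance `P(A ∩ B) - P(A) P(B)` of two events; for `A = {X ≤ a}` and `B = {Y ≤ b}`, its
sign for all `a` and `b` is the global dependence of `X` and `Y`. -/
noncomputable def eventCovar (μ : Measure Ω) (A B : Set Ω) : ℝ :=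
  μ.real (A ∩ B) - μ.real A * μ.real B

lemma covar_indicator_one {μ : Measure Ω} {A B : Set Ω} (hA : NullMeasurableSet A μ)
    (hB : NullMeasurableSet B μ) :
    covar μ (A.indicator 1) (B.indicator 1) = eventCovar μ A B := by
  have integral_one {C : Set Ω} (hC : NullMeasurableSet C μ) :
      ∫ ω, C.indicator (1 : Ω → ℝ) ω ∂μ = μ.real C := by
    simp [integral_indicator₀ hC]
  simp only [covar, eventCovar, ← integral_one hA, ← integral_one hB,
    ← integral_one (hA.inter hB), inter_indicator_one, Pi.mul_apply]

lemma eventCovar_empty_left (μ : Measure Ω) (B : Set Ω) : eventCovar μ ∅ B = 0 := by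
  simp [eventCovar]

lemma eventCovar_empty_right (μ : Measure Ω) (A : Set Ω) : eventCovar μ A ∅ = 0 := by
  simp [eventCovar]

lemma tendsto_eventCovar_iUnion (μ : Measure Ω) [IsFiniteMeasure μ] {A B : ℕ → Set Ω}
    (hA : Monotone A) (hB : Monotone B) :
    Tendsto (fun n => eventCovar μ (A n) (B n)) atTop (𝓝 (eventCovar μ (⋃ n, A n) (⋃ n, B n))) := by
  have tendsto_real {C : ℕ → Set Ω} (hC : Monotone C) :
      Tendsto (fun n => μ.real (C n)) atTop (𝓝 (μ.real (⋃ n, C n))) :=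
    (ENNReal.tendsto_toReal (measure_ne_top μ _)).comp (tendsto_measure_iUnion_atTop hC)
  rw [eventCovar, ← iUnion_inter_of_monotone hA hB]
  exact (tendsto_real (hA.inter hB)).sub ((tendsto_real hA).mul (tendsto_real hB))

end EventCovar

section LowerSet

variable {α β : Type*}
  [LinearOrder α] [TopologicalSpace α] [OrderTopology α] [SecondCountableTopology α]
  [LinearOrder β] [TopologicalSpace β] [OrderTopology β] [SecondCountableTopology β]

lemma exists_monotone_iUnion_Iic_eq_of_isLowerSet {L : Set α} (hL : IsLowerSet L)
    (hne : L.Nonempty) : ∃ a : ℕ → α, Monotone a ∧ ⋃ n, Iic (a n) = L := by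
  have := hL.ordConnected
  have := hne.to_subtype
  obtain ⟨a, ha_mono, ha_top⟩ := exists_seq_monotone_tendsto_atTop_atTop L
  refine ⟨fun n => a n, ha_mono, subset_antisymm ?_ fun x hx => ?_⟩
  · exact iUnion_subset fun n x hx => hL hx (a n).2
  · obtain ⟨n, hn⟩ := (ha_top.eventually_ge_atTop ⟨x, hx⟩).exists
    exact mem_iUnion_of_mem n hn

lemma eventCovar_preimage_mem_of_isLowerSet {Ω : Type*} [MeasurableSpace Ω] {μ : Measure Ω}
    [IsFiniteMeasure μ] {X : Ω → α} {Y : Ω → β} {S : Set ℝ} (hS : IsClosed S) (hS₀ : 0 ∈ S)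
    (h : ∀ a b, eventCovar μ (X ⁻¹' Iic a) (Y ⁻¹' Iic b) ∈ S)
    {L : Set α} {M : Set β} (hL : IsLowerSet L) (hM : IsLowerSet M) :
    eventCovar μ (X ⁻¹' L) (Y ⁻¹' M) ∈ S := by
  rcases L.eq_empty_or_nonempty with rfl | hLne
  · rwa [preimage_empty, eventCovar_empty_left]
  rcases M.eq_empty_or_nonempty with rfl | hMne
  · rwa [preimage_empty, eventCovar_empty_right]
  obtain ⟨a, ha, rfl⟩ := exists_monotone_iUnion_Iic_eq_of_isLowerSet hL hLne
  obtain ⟨b, hb, rfl⟩ := exists_monotone_iUnion_Iic_eq_of_isLowerSet hM hMne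
  rw [preimage_iUnion, preimage_iUnion]
  refine hS.mem_of_tendsto (tendsto_eventCovar_iUnion μ ?_ ?_) (.of_forall fun n => h (a n) (b n))
  · exact fun m n hmn => preimage_mono (Iic_subset_Iic.2 (ha hmn))
  · exact fun m n hmn => preimage_mono (Iic_subset_Iic.2 (hb hmn))

end LowerSet

section ThresholdDiff

/-- The difference `𝟙[u ≤ s] - 𝟙[u' ≤ s]` of the threshold indicators at level `s`, whose integral
over all levels recovers `u' - u`. -/
noncomputable def thresholdDiff (u u' s : ℝ) : ℝ :=
  (Iic s).indicator 1 u - (Iic s).indicator 1 u'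

lemma measurable_thresholdDiff :
    Measurable fun z : ℝ × ℝ × ℝ => thresholdDiff z.1 z.2.1 z.2.2 := by
  have hthreshold : Measurable fun z : ℝ × ℝ => (Iic z.2).indicator (1 : ℝ → ℝ) z.1 :=
    measurable_one.indicator (measurableSet_le measurable_fst measurable_snd)
  exact (hthreshold.comp (measurable_fst.prodMk measurable_snd.snd)).sub
    (hthreshold.comp measurable_snd)

lemma thresholdDiff_eq_indicator_sub_indicator (u u' : ℝ) :
    thresholdDiff u u' = (Ico u u').indicator 1 - (Ico u' u).indicator 1 := by
  ext s
  simp only [thresholdDiff, indicator_apply, mem_Iic, mem_Ico, Pi.sub_apply, Pi.one_apply]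
  grind

lemma abs_thresholdDiff (u u' s : ℝ) :
    |thresholdDiff u u' s| = (Ico u u').indicator 1 s + (Ico u' u).indicator 1 s := by
  simp only [thresholdDiff, indicator_apply, mem_Iic, mem_Ico, Pi.one_apply]
  grind

lemma integrable_indicator_Ico_one (a b : ℝ) : Integrable ((Ico a b).indicator (1 : ℝ → ℝ)) :=
  (integrable_indicator_iff measurableSet_Ico).2 (integrableOn_const measure_Ico_lt_top.ne)

lemma integrable_thresholdDiff (u u' : ℝ) : Integrable (thresholdDiff u u') := by
  rw [thresholdDiff_eq_indicator_sub_indicator]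
  exact (integrable_indicator_Ico_one u u').sub (integrable_indicator_Ico_one u' u)

lemma integral_thresholdDiff (u u' : ℝ) : ∫ s, thresholdDiff u u' s = u' - u := by
  rw [thresholdDiff_eq_indicator_sub_indicator, integral_sub'
    (integrable_indicator_Ico_one u u') (integrable_indicator_Ico_one u' u),
    integral_indicator_one measurableSet_Ico, integral_indicator_one measurableSet_Ico,
    Real.volume_real_Ico, Real.volume_real_Ico]
  grind

lemma integral_abs_thresholdDiff (u u' : ℝ) : ∫ s, |thresholdDiff u u' s| = |u - u'| := by
  simp only [abs_thresholdDiff]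
  rw [integral_add (integrable_indicator_Ico_one u u') (integrable_indicator_Ico_one u' u),
    integral_indicator_one measurableSet_Ico, integral_indicator_one measurableSet_Ico,
    Real.volume_real_Ico, Real.volume_real_Ico]
  grind

lemma integral_thresholdDiff_mul_thresholdDiff (u u' v v' : ℝ) :
    ∫ p : ℝ × ℝ, thresholdDiff u u' p.1 * thresholdDiff v v' p.2 = (u - u') * (v - v') := by
  rw [Measure.volume_eq_prod, integral_prod_mul, integral_thresholdDiff, integral_thresholdDiff]
  ring

lemma integral_norm_thresholdDiff_mul_thresholdDiff (u u' v v' : ℝ) :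
    ∫ p : ℝ × ℝ, ‖thresholdDiff u u' p.1 * thresholdDiff v v' p.2‖ = |(u - u') * (v - v')| := by
  simp only [Real.norm_eq_abs, abs_mul]
  rw [Measure.volume_eq_prod, integral_prod_mul (fun s => |thresholdDiff u u' s|)
    (fun t => |thresholdDiff v v' t|), integral_abs_thresholdDiff, integral_abs_thresholdDiff]

end ThresholdDiff

section Hoeffding

variable {Ω : Type*} [MeasurableSpace Ω] {μ : Measure Ω} {U V : Ω → ℝ}

lemma integrable_sub_mul_sub_prod [IsFiniteMeasure μ]
    (hU : Integrable U μ) (hV : Integrable V μ) (hUV : Integrable (fun ω => U ω * V ω) μ) :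
    Integrable (fun q : Ω × Ω => (U q.1 - U q.2) * (V q.1 - V q.2)) (μ.prod μ) := by
  convert ((hUV.comp_fst μ).sub' (hU.mul_prod hV)).sub' ((hV.mul_prod hU).sub' (hUV.comp_snd μ))
    using 2 with q
  ring

lemma integral_sub_mul_sub_prod [IsProbabilityMeasure μ]
    (hU : Integrable U μ) (hV : Integrable V μ) (hUV : Integrable (fun ω => U ω * V ω) μ) :
    ∫ q : Ω × Ω, (U q.1 - U q.2) * (V q.1 - V q.2) ∂μ.prod μ = 2 * covar μ U V := by
  have hfst := hUV.comp_fst μ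
  have hsnd := hUV.comp_snd μ
  have hcross := hU.mul_prod hV
  have hcross' := hV.mul_prod hU
  calc
    _ = ∫ q : Ω × Ω, (U q.1 * V q.1 - U q.1 * V q.2) - (V q.1 * U q.2 - U q.2 * V q.2)
          ∂μ.prod μ := by
      congr with q
      ring
    _ = (∫ ω, U ω * V ω ∂μ - (∫ ω, U ω ∂μ) * ∫ ω, V ω ∂μ)
          - ((∫ ω, V ω ∂μ) * (∫ ω, U ω ∂μ) - ∫ ω, U ω * V ω ∂μ) := by
      rw [integral_sub (hfst.sub' hcross) (hcross'.sub' hsnd), integral_sub hfst hcross,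
        integral_sub hcross' hsnd, integral_prod_mul, integral_prod_mul,
        integral_fun_fst fun ω => U ω * V ω, integral_fun_snd fun ω => U ω * V ω]
      simp only [probReal_univ, one_smul]
    _ = 2 * covar μ U V := by
      rw [covar]
      ring

lemma integrable_thresholdDiff_mul_thresholdDiff_prod [IsFiniteMeasure μ]
    (hU : Integrable U μ) (hV : Integrable V μ) (hUV : Integrable (fun ω => U ω * V ω) μ) :
    Integrable (fun z : (Ω × Ω) × ℝ × ℝ =>
      thresholdDiff (U z.1.1) (U z.1.2) z.2.1 * thresholdDiff (V z.1.1) (V z.1.2) z.2.2)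
      ((μ.prod μ).prod volume) := by
  have aemeasurable_diff {W : Ω → ℝ} (hW : AEMeasurable W μ) {r : ℝ × ℝ → ℝ} (hr : Measurable r) :
      AEMeasurable (fun z : (Ω × Ω) × ℝ × ℝ => thresholdDiff (W z.1.1) (W z.1.2) (r z.2))
        ((μ.prod μ).prod volume) :=
    measurable_thresholdDiff.comp_aemeasurable
      (hW.comp_fst.comp_fst.prodMk (hW.comp_snd.comp_fst.prodMk hr.aemeasurable.comp_snd))
  refine (integrable_prod_iff ((aemeasurable_diff hU.aemeasurable measurable_fst).fun_mul
    (aemeasurable_diff hV.aemeasurable measurable_snd)).aestronglyMeasurable).2 ⟨?_, ?_⟩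
  · exact .of_forall fun q => (integrable_thresholdDiff (U q.1) (U q.2)).mul_prod
      (integrable_thresholdDiff (V q.1) (V q.2))
  · simp only [integral_norm_thresholdDiff_mul_thresholdDiff]
    exact (integrable_sub_mul_sub_prod hU hV hUV).abs

lemma integral_thresholdDiff_mul_thresholdDiff_prod [IsProbabilityMeasure μ]
    (hU : AEMeasurable U μ) (hV : AEMeasurable V μ) (s t : ℝ) :
    ∫ q : Ω × Ω, thresholdDiff (U q.1) (U q.2) s * thresholdDiff (V q.1) (V q.2) t ∂μ.prod μ
      = 2 * eventCovar μ (U ⁻¹' Iic s) (V ⁻¹' Iic t) := by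
  have hA : NullMeasurableSet (U ⁻¹' Iic s) μ := hU.nullMeasurable measurableSet_Iic
  have hB : NullMeasurableSet (V ⁻¹' Iic t) μ := hV.nullMeasurable measurableSet_Iic
  have integrable_one {C : Set Ω} (hC : NullMeasurableSet C μ) :
      Integrable (C.indicator (1 : Ω → ℝ)) μ :=
    (integrable_const 1).indicator₀ hC
  rw [← covar_indicator_one hA hB]
  have hAB := integrable_one (hA.inter hB)
  rw [inter_indicator_one] at hAB
  exact integral_sub_mul_sub_prod (integrable_one hA) (integrable_one hB) hAB

theorem covar_eq_integral_eventCovar [IsProbabilityMeasure μ]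
    (hU : Integrable U μ) (hV : Integrable V μ) (hUV : Integrable (fun ω => U ω * V ω) μ) :
    covar μ U V = ∫ p : ℝ × ℝ, eventCovar μ (U ⁻¹' Iic p.1) (V ⁻¹' Iic p.2) := by
  have hdouble : 2 * covar μ U V
      = 2 * ∫ p : ℝ × ℝ, eventCovar μ (U ⁻¹' Iic p.1) (V ⁻¹' Iic p.2) := by
    calc
      _ = ∫ q : Ω × Ω, (U q.1 - U q.2) * (V q.1 - V q.2) ∂μ.prod μ :=
        (integral_sub_mul_sub_prod hU hV hUV).symm
      _ = ∫ q : Ω × Ω, (∫ p : ℝ × ℝ, thresholdDiff (U q.1) (U q.2) p.1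
            * thresholdDiff (V q.1) (V q.2) p.2) ∂μ.prod μ := by
        simp only [integral_thresholdDiff_mul_thresholdDiff]
      _ = ∫ p : ℝ × ℝ, (∫ q : Ω × Ω, thresholdDiff (U q.1) (U q.2) p.1
            * thresholdDiff (V q.1) (V q.2) p.2 ∂μ.prod μ) :=
        integral_integral_swap (integrable_thresholdDiff_mul_thresholdDiff_prod hU hV hUV)
      _ = _ := by
        simp only [integral_thresholdDiff_mul_thresholdDiff_prod hU.aemeasurable hV.aemeasurable,
          integral_const_mul]
  exact mul_left_cancel₀ two_ne_zero hdouble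

end Hoeffding

theorem generalised_covariance_sign_under_global_dependence_general
    {Ω α β : Type*} [MeasurableSpace Ω]
    [LinearOrder α] [TopologicalSpace α] [OrderTopology α] [SecondCountableTopology α]
    [LinearOrder β] [TopologicalSpace β] [OrderTopology β] [SecondCountableTopology β]
    (μ : Measure Ω) [IsProbabilityMeasure μ] (X : Ω → α) (Y : Ω → β)
    (g₁ : α → ℝ) (g₂ : β → ℝ) (hg₁ : Monotone g₁) (hg₂ : Monotone g₂)
    (hiX : Integrable (fun ω => g₁ (X ω)) μ)
    (hiY : Integrable (fun ω => g₂ (Y ω)) μ)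
    (hiP : Integrable (fun ω => g₁ (X ω) * g₂ (Y ω)) μ) :
    ((∀ a b, μ.real {ω | X ω ≤ a} * μ.real {ω | Y ω ≤ b} ≤ μ.real {ω | X ω ≤ a ∧ Y ω ≤ b}) →
      0 ≤ covar μ (fun ω => g₁ (X ω)) (fun ω => g₂ (Y ω))) ∧
    ((∀ a b, μ.real {ω | X ω ≤ a ∧ Y ω ≤ b} ≤ μ.real {ω | X ω ≤ a} * μ.real {ω | Y ω ≤ b}) →
      covar μ (fun ω => g₁ (X ω)) (fun ω => g₂ (Y ω)) ≤ 0) := by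
  have hL (s : ℝ) : IsLowerSet (g₁ ⁻¹' Iic s) := (isLowerSet_Iic s).preimage hg₁
  have hM (t : ℝ) : IsLowerSet (g₂ ⁻¹' Iic t) := (isLowerSet_Iic t).preimage hg₂
  rw [covar_eq_integral_eventCovar hiX hiY hiP]
  constructor
  · intro h
    exact integral_nonneg fun p => eventCovar_preimage_mem_of_isLowerSet isClosed_Ici self_mem_Ici
      (fun a b => sub_nonneg.2 (h a b)) (hL p.1) (hM p.2)
  · intro h
    exact integral_nonpos fun p => eventCovar_preimage_mem_of_isLowerSet isClosed_Iic self_mem_Iic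
      (fun a b => sub_nonpos.2 (h a b)) (hL p.1) (hM p.2)

theorem generalised_covariance_sign_under_global_dependence
    {Ω : Type*} [MeasurableSpace Ω] (μ : Measure Ω) [IsProbabilityMeasure μ]
    (X Y : Ω → ℝ) (hX : Measurable X) (hY : Measurable Y)
    (g₁ g₂ : ℝ → ℝ) (hg₁ : Monotone g₁) (hg₂ : Monotone g₂)
    (hiX : Integrable (fun ω => g₁ (X ω)) μ)
    (hiY : Integrable (fun ω => g₂ (Y ω)) μ)
    (hiP : Integrable (fun ω => g₁ (X ω) * g₂ (Y ω)) μ) :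
    ((∀ a b : ℝ, cdfF μ X a * cdfF μ Y b ≤ (μ {ω | X ω ≤ a ∧ Y ω ≤ b}).toReal) →
      0 ≤ covar μ (fun ω => g₁ (X ω)) (fun ω => g₂ (Y ω))) ∧
    ((∀ a b : ℝ, (μ {ω | X ω ≤ a ∧ Y ω ≤ b}).toReal ≤ cdfF μ X a * cdfF μ Y b) →
      covar μ (fun ω => g₁ (X ω)) (fun ω => g₂ (Y ω)) ≤ 0) := by
  exact generalised_covariance_sign_under_global_dependence_general μ X Y g₁ g₂ hg₁ hg₂ hiX hiY hiP
end

section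
/- Let X, Y be real random variables on a common probability space and let ν be a finite Borel measure on ℝ² that is strictly positive (i.e., ν(U) > 0 for every nonempty open U ⊆ ℝ²). If ∫_{ℝ²} (P(X ≤ a, Y ≤ b) − F_X(a)·F_Y(b)) dν(a,b) = ∫_{ℝ²} (min(F_X(a), F_Y(b)) − F_X(a)·F_Y(b)) dν(a,b), then (X,Y) is comonotonic. (That is, a summary correlation induced by CDF covariance with respect to a strictly positive weight measure equals 1 only for comonotonic pairs.) -/
open MeasureTheory

/-!
Since `P(X ≤ a, Y ≤ b) ≤ min (F_X a) (F_Y b)` everywhere, equality of the two integrals forces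
equality `ν`-almost everywhere, hence on a dense set of points `(a, b)`. At such a point one of the
events `X ≤ a` and `Y ≤ b` is almost surely contained in the other. Two outcomes ordered in opposite
ways by `X` and `Y` span an open rectangle; a point of a countable dense set inside it contradicts
this containment. So almost surely `ΔX * ΔY ≥ 0` for any two outcomes, that is
`|Δ(X - Y)| ≤ |Δ(X + Y)|`: the difference `X - Y` is a `1`-Lipschitz function of `X + Y`, which
extends to a `1`-Lipschitz `u : ℝ → ℝ`. Then `(z + u z) / 2` and `(z - u z) / 2` are nondecreasing,
and at `z = X + Y` they return `X` and `Y`.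
-/

open Set Filter
open scoped NNReal

section MonotoneParametrization

variable {ι α : Type*} [PseudoMetricSpace α]

theorem exists_lipschitzWith_comp_eq {f : ι → ℝ} {g : ι → α} {K : ℝ≥0}
    (h : ∀ i j, dist (f i) (f j) ≤ K * dist (g i) (g j)) :
    ∃ u : α → ℝ, LipschitzWith K u ∧ ∀ i, u (g i) = f i := by
  have hfactor : f.FactorsThrough g := fun i j hij =>
    dist_le_zero.1 (by simpa [hij] using h i j)
  have hlip : LipschitzOnWith K (Function.extend g f 0) (range g) := by
    refine LipschitzOnWith.of_dist_le_mul ?_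
    rintro _ ⟨i, rfl⟩ _ ⟨j, rfl⟩
    simpa only [hfactor.extend_apply] using h i j
  obtain ⟨u, hu, hext⟩ := hlip.extend_real
  exact ⟨u, hu, fun i => (hext (mem_range_self i)).symm.trans (hfactor.extend_apply 0 i)⟩

theorem monotone_id_add_of_lipschitzWith_one {u : ℝ → ℝ} (hu : LipschitzWith 1 u) :
    Monotone fun z => z + u z := fun z w hzw => by
  have hdist := hu.dist_le_mul z w
  rw [NNReal.coe_one, one_mul, Real.dist_eq, Real.dist_eq, abs_sub_comm z w,
    abs_of_nonneg (sub_nonneg.2 hzw)] at hdist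
  linarith [le_abs_self (u z - u w)]

theorem monotone_id_sub_of_lipschitzWith_one {u : ℝ → ℝ} (hu : LipschitzWith 1 u) :
    Monotone fun z => z - u z := by
  simpa only [sub_eq_add_neg, Pi.neg_apply] using monotone_id_add_of_lipschitzWith_one hu.neg

theorem dist_sub_le_dist_add_of_monovary {f g : ι → ℝ} (h : Monovary f g) (i j : ι) :
    dist (f i - g i) (f j - g j) ≤ dist (f i + g i) (f j + g j) := by
  rw [Real.dist_eq, Real.dist_eq, ← sq_le_sq]
  linarith [h.sub_mul_sub_nonneg i j]

theorem exists_monotone_comp_add_eq_of_monovary {f g : ι → ℝ} (h : Monovary f g) :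
    ∃ φ ψ : ℝ → ℝ, Monotone φ ∧ Monotone ψ ∧
      ∀ i, φ (f i + g i) = f i ∧ ψ (f i + g i) = g i := by
  obtain ⟨u, hu, hfac⟩ := exists_lipschitzWith_comp_eq (K := 1) (f := f - g) (g := f + g)
    (by simpa using dist_sub_le_dist_add_of_monovary h)
  simp only [Pi.add_apply, Pi.sub_apply] at hfac
  refine ⟨fun z => (z + u z) / 2, fun z => (z - u z) / 2,
    (monotone_id_add_of_lipschitzWith_one hu).div_const zero_le_two,
    (monotone_id_sub_of_lipschitzWith_one hu).div_const zero_le_two,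
    fun i => ⟨?_, ?_⟩⟩
  · linarith [hfac i]
  · linarith [hfac i]

end MonotoneParametrization

section

variable {Ω : Type*} [MeasurableSpace Ω] {μ : Measure Ω} {X Y : Ω → ℝ}

theorem comonotonic_of_monovaryOn_mem_ae (hX : AEMeasurable X μ) (hY : AEMeasurable Y μ)
    {s : Set Ω} (hs : s ∈ ae μ) (h : MonovaryOn X Y s) : Comonotonic μ X Y := by
  obtain ⟨φ, ψ, hφ, hψ, hfac⟩ :=
    exists_monotone_comp_add_eq_of_monovary (monovaryOn_iff_monovary.1 h)
  have hZ : AEMeasurable (fun ω => X ω + Y ω) μ := hX.add hY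
  refine ⟨hZ.mk, φ, ψ, hZ.measurable_mk, hφ, hψ, Measure.map_congr ?_⟩
  filter_upwards [hs, hZ.ae_eq_mk] with ω hω hZω
  rw [← hZω, (hfac ⟨ω, hω⟩).1, (hfac ⟨ω, hω⟩).2]

theorem exists_mem_ae_monovaryOn_of_dense {D : Set (ℝ × ℝ)} (hD : Dense D)
    (h : ∀ p ∈ D, {ω | X ω ≤ p.1} ≤ᵐ[μ] {ω | Y ω ≤ p.2} ∨
      {ω | Y ω ≤ p.2} ≤ᵐ[μ] {ω | X ω ≤ p.1}) :
    ∃ s ∈ ae μ, MonovaryOn X Y s := by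
  obtain ⟨C, hCD, hCcount, hC⟩ := hD.exists_countable_dense_subset
  have hsep : ∀ p ∈ C, ∃ t ∈ ae μ,
      (∀ ω ∈ t, X ω ≤ p.1 → Y ω ≤ p.2) ∨ (∀ ω ∈ t, Y ω ≤ p.2 → X ω ≤ p.1) := fun p hp =>
    (h p (hCD hp)).elim (fun hae => ⟨_, hae, .inl fun _ hω => hω⟩)
      fun hae => ⟨_, hae, .inr fun _ hω => hω⟩
  choose! t ht hsep using hsep
  refine ⟨⋂ p ∈ C, t p, (countable_bInter_mem hCcount).2 ht, fun i hi j hj hY => ?_⟩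
  by_contra! hX
  obtain ⟨p, ⟨⟨hXp, hpX⟩, hYp, hpY⟩, hpC⟩ := hC.inter_open_nonempty
    (Ioo (X j) (X i) ×ˢ Ioo (Y i) (Y j)) (isOpen_Ioo.prod isOpen_Ioo)
    ((nonempty_Ioo.2 hX).prod (nonempty_Ioo.2 hY))
  rcases hsep p hpC with hXY | hYX
  · exact hpY.not_ge (hXY j (mem_iInter₂.1 hj p hpC) hXp.le)
  · exact hpX.not_ge (hYX i (mem_iInter₂.1 hi p hpC) hYp.le)

end

section

variable {α : Type*} [MeasurableSpace α] {μ : Measure α} [IsFiniteMeasure μ] {s t : Set α}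

theorem ae_le_of_measureReal_inter_eq_left (ht : NullMeasurableSet t μ)
    (h : μ.real (s ∩ t) = μ.real s) : s ≤ᵐ[μ] t := by
  rw [ae_le_set, ← measureReal_eq_zero_iff]
  linarith [measureReal_inter_add_sdiff₀ (s := s) ht]

theorem ae_le_or_ae_le_of_measureReal_inter_eq_min (hs : NullMeasurableSet s μ)
    (ht : NullMeasurableSet t μ) (h : μ.real (s ∩ t) = min (μ.real s) (μ.real t)) :
    s ≤ᵐ[μ] t ∨ t ≤ᵐ[μ] s := by
  rcases min_choice (μ.real s) (μ.real t) with hmin | hmin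
  · exact .inl (ae_le_of_measureReal_inter_eq_left ht (h.trans hmin))
  · exact .inr (ae_le_of_measureReal_inter_eq_left hs (by rw [inter_comm, h, hmin]))

end

section ThresholdCovariance

variable {Ω : Type*} [MeasurableSpace Ω] (μ : Measure Ω) (X Y : Ω → ℝ)

/-- The joint CDF `P(X ≤ a, Y ≤ b)` at `p = (a, b)`, the part of the threshold covariance that
depends on the coupling of `X` and `Y` and not only on the marginals. -/
noncomputable def jointCDF (p : ℝ × ℝ) : ℝ :=
  (μ {ω | X ω ≤ p.1 ∧ Y ω ≤ p.2}).toReal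

/-- The threshold covariance `TCov_{a,b}(X, Y)` at `p = (a, b)`; its `ν`-integral is the summary
covariance `SCov_{CDF,ν}(X, Y)`. -/
noncomputable def thresholdCov (p : ℝ × ℝ) : ℝ :=
  jointCDF μ X Y p - cdfF μ X p.1 * cdfF μ Y p.2

/-- The threshold covariance at `p = (a, b)` of a comonotonic pair with the same marginals as
`(X, Y)`: the joint CDF is replaced by its Fréchet–Hoeffding upper bound, so that no such pair has
to be constructed. -/
noncomputable def comonotonicThresholdCov (p : ℝ × ℝ) : ℝ :=
  min (cdfF μ X p.1) (cdfF μ Y p.2) - cdfF μ X p.1 * cdfF μ Y p.2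

variable {μ X Y} [IsFiniteMeasure μ]

theorem jointCDF_le_min (p : ℝ × ℝ) :
    jointCDF μ X Y p ≤ min (cdfF μ X p.1) (cdfF μ Y p.2) :=
  le_min (measureReal_mono fun _ hω => hω.1) (measureReal_mono fun _ hω => hω.2)

theorem thresholdCov_le_comonotonicThresholdCov (p : ℝ × ℝ) :
    thresholdCov μ X Y p ≤ comonotonicThresholdCov μ X Y p :=
  sub_le_sub_right (jointCDF_le_min p) _

theorem comonotonic_of_dense_thresholdCov_eq (hX : AEMeasurable X μ) (hY : AEMeasurable Y μ)
    (h : Dense {p | thresholdCov μ X Y p = comonotonicThresholdCov μ X Y p}) :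
    Comonotonic μ X Y := by
  obtain ⟨s, hs, hmono⟩ := exists_mem_ae_monovaryOn_of_dense (μ := μ) h fun p hp =>
    ae_le_or_ae_le_of_measureReal_inter_eq_min (nullMeasurableSet_le hX aemeasurable_const)
      (nullMeasurableSet_le hY aemeasurable_const) (sub_left_inj.1 hp)
  exact comonotonic_of_monovaryOn_mem_ae hX hY hs hmono

theorem monotone_cdfF : Monotone (cdfF μ X) := fun _ _ hab =>
  measureReal_mono fun _ hω => le_trans hω hab

theorem measurable_jointCDF (hX : AEMeasurable X μ) (hY : AEMeasurable Y μ) :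
    Measurable (jointCDF μ X Y) := by
  have hmap : jointCDF μ X Y = fun p => (μ.map (fun ω => (X ω, Y ω)) (Iic p)).toReal := by
    ext p
    rw [Measure.map_apply_of_aemeasurable (hX.prodMk hY) measurableSet_Iic]
    rfl
  have hle : MeasurableSet {q : (ℝ × ℝ) × (ℝ × ℝ) | q.2 ≤ q.1} :=
    measurableSet_le measurable_snd measurable_fst
  rw [hmap]
  exact (measurable_measure_prodMk_left hle).ennreal_toReal

variable {ν : Measure (ℝ × ℝ)} [IsFiniteMeasure ν]

theorem integrable_jointCDF (hX : AEMeasurable X μ) (hY : AEMeasurable Y μ) :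
    Integrable (jointCDF μ X Y) ν :=
  .of_mem_Icc 0 (μ.real univ) (measurable_jointCDF hX hY).aemeasurable
    (ae_of_all _ fun _ => ⟨measureReal_nonneg, measureReal_mono (subset_univ _)⟩)

theorem memLp_top_cdfF_comp {β : Type*} [MeasurableSpace β] {ρ : Measure β}
    {f : β → ℝ} (hf : AEMeasurable f ρ) : MemLp (fun b => cdfF μ X (f b)) ⊤ ρ :=
  memLp_top_of_bound (monotone_cdfF.measurable.comp_aemeasurable hf).aestronglyMeasurable
    (μ.real univ) (ae_of_all _ fun _ =>
      (Real.norm_of_nonneg measureReal_nonneg).trans_le (measureReal_mono (subset_univ _)))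

theorem integrable_cdfF_mul_cdfF :
    Integrable (fun p : ℝ × ℝ => cdfF μ X p.1 * cdfF μ Y p.2) ν :=
  ((memLp_top_cdfF_comp measurable_snd.aemeasurable).mul
    (memLp_top_cdfF_comp measurable_fst.aemeasurable) (r := ⊤)).integrable le_top

theorem integrable_thresholdCov (hX : AEMeasurable X μ) (hY : AEMeasurable Y μ) :
    Integrable (thresholdCov μ X Y) ν :=
  (integrable_jointCDF hX hY).sub integrable_cdfF_mul_cdfF

theorem integrable_comonotonicThresholdCov :
    Integrable (comonotonicThresholdCov μ X Y) ν :=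
  (((memLp_top_cdfF_comp measurable_fst.aemeasurable).integrable le_top).inf
    ((memLp_top_cdfF_comp measurable_snd.aemeasurable).integrable le_top)).sub
    integrable_cdfF_mul_cdfF

end ThresholdCovariance

theorem summary_correlation_one_implies_comonotonic_general
    {Ω : Type*} [MeasurableSpace Ω] {μ : Measure Ω} [IsFiniteMeasure μ]
    {X Y : Ω → ℝ} (hX : AEMeasurable X μ) (hY : AEMeasurable Y μ)
    {ν : Measure (ℝ × ℝ)} [ν.IsOpenPosMeasure]
    (hcov : Integrable (thresholdCov μ X Y) ν)
    (hcomon : Integrable (comonotonicThresholdCov μ X Y) ν)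
    (heq : ∫ p, thresholdCov μ X Y p ∂ν = ∫ p, comonotonicThresholdCov μ X Y p ∂ν) :
    Comonotonic μ X Y := by
  have hae : thresholdCov μ X Y =ᵐ[ν] comonotonicThresholdCov μ X Y :=
    (integral_eq_iff_of_ae_le hcov hcomon
      (ae_of_all _ thresholdCov_le_comonotonicThresholdCov)).1 heq
  exact comonotonic_of_dense_thresholdCov_eq hX hY (Measure.dense_of_ae hae)

theorem summary_correlation_one_implies_comonotonic
    {Ω : Type*} [MeasurableSpace Ω] (μ : Measure Ω) [IsProbabilityMeasure μ]
    (X Y : Ω → ℝ) (hX : Measurable X) (hY : Measurable Y)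
    (ν : Measure (ℝ × ℝ)) [IsFiniteMeasure ν]
    (hpos : ∀ U : Set (ℝ × ℝ), IsOpen U → U.Nonempty → 0 < ν U)
    (heq : ∫ p : ℝ × ℝ,
        ((μ {ω | X ω ≤ p.1 ∧ Y ω ≤ p.2}).toReal - cdfF μ X p.1 * cdfF μ Y p.2) ∂ν
      = ∫ p : ℝ × ℝ,
        (min (cdfF μ X p.1) (cdfF μ Y p.2) - cdfF μ X p.1 * cdfF μ Y p.2) ∂ν) :
    Comonotonic μ X Y := by
  have : ν.IsOpenPosMeasure := ⟨fun U hU hne => (hpos U hU hne).ne'⟩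
  exact summary_correlation_one_implies_comonotonic_general hX.aemeasurable hY.aemeasurable
    (integrable_thresholdCov hX.aemeasurable hY.aemeasurable) integrable_comonotonicThresholdCov heq
end
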